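/- (Deroin–Kleptsyn–Navas) Let G be a countable group with an orientation preserving C^1 action on the circle. If there is no G-invariant Borel probability measure on the circle, then there exists an element g ∈ G all of whose fixed points are hyperbolic (the derivative of g at each of its fixed points is different from 1); in particular, g has a nonempty finite set of fixed points. -/

import Mathlib

noncomputable section

open MeasureTheory

/-- The circle `S¹ = ℝ/ℤ`. -/
abbrev 𝕊 : Type := AddCircle (1 : ℝ)

/-- `F : ℝ → ℝ` is a lift of the circle bijection `f` witnessing that `f` is an
orientation preserving homeomorphism of the circle: `F` is a strictly increasing
homeomorphism of `ℝ` (equivalently, continuous and strictly increasing) satisfying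
`F (x + 1) = F x + 1`, and projecting to `f`. -/
def IsOPLift (f : Equiv.Perm 𝕊) (F : ℝ → ℝ) : Prop :=
  Continuous F ∧ StrictMono F ∧ (∀ x : ℝ, F (x + 1) = F x + 1) ∧
    ∀ x : ℝ, f (x : 𝕊) = (F x : 𝕊)

/-- `f` is an orientation preserving homeomorphism of the circle. -/
def IsOPHomeo (f : Equiv.Perm 𝕊) : Prop := ∃ F : ℝ → ℝ, IsOPLift f F

/-- `F` is a lift witnessing that `f` is an orientation preserving `C¹` diffeomorphism
of the circle: an orientation preserving lift which is `C¹` with nowhere vanishing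
derivative. -/
def IsC1Lift (f : Equiv.Perm 𝕊) (F : ℝ → ℝ) : Prop :=
  IsOPLift f F ∧ ContDiff ℝ 1 F ∧ ∀ x : ℝ, deriv F x ≠ 0

/-- `f` is an orientation preserving `C¹` diffeomorphism of the circle, i.e. an element
of `Diff¹₊(S¹)`. -/
def IsC1Diffeo (f : Equiv.Perm 𝕊) : Prop := ∃ F : ℝ → ℝ, IsC1Lift f F

section DKNhelpers

section
open MeasureTheory Set Filter Topology

/-- The group of lifts. -/
def Gam {G : Type*} [Group G] (ρ : G →* Equiv.Perm 𝕊) : Subgroup CircleDeg1Liftˣ where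
  carrier := {u | ∃ g, ∀ x : ℝ, ρ g (x : 𝕊) = ((u x : ℝ) : 𝕊)}
  mul_mem' := by
    rintro u v ⟨g, hg⟩ ⟨h, hh⟩
    exact ⟨g * h, fun x => by simp [hg, hh]⟩
  one_mem' := ⟨1, fun x => by simp⟩
  inv_mem' := by
    rintro u ⟨g, hg⟩
    refine ⟨g⁻¹, fun x => ?_⟩
    rw [map_inv, Equiv.Perm.inv_eq_iff_eq, hg]
    simp

theorem Gam_exists {G : Type*} [Group G] (ρ : G →* Equiv.Perm 𝕊) (g : G) (F : ℝ → ℝ)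
    (hF : IsOPLift (ρ g) F) : ∃ u ∈ Gam ρ, (∀ x : ℝ, u x = F x) ∧ ∀ x : ℝ, ρ g (x : 𝕊) = ((u x : ℝ) : 𝕊) := by
  obtain ⟨hc, hm, h1, hp⟩ := hF
  let f : CircleDeg1Lift := ⟨⟨F, hm.monotone⟩, h1⟩
  have hf : IsUnit f := by
    rw [CircleDeg1Lift.isUnit_iff_bijective]
    exact ⟨hm.injective, f.continuous_iff_surjective.1 hc⟩
  obtain ⟨u, hu⟩ := hf
  have : ∀ x : ℝ, u x = F x := fun x => by rw [hu]; rfl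
  have h2 : ∀ x : ℝ, ρ g (x : 𝕊) = ((u x : ℝ) : 𝕊) := fun x => by rw [hp, this]
  exact ⟨u, ⟨g, h2⟩, this, h2⟩

theorem coe_int_add (x : ℝ) (m : ℤ) : ((m + x : ℝ) : 𝕊) = (x : 𝕊) := by
  have : ((m : ℝ) : 𝕊) = 0 := by
    rw [AddCircle.coe_eq_zero_iff]; exact ⟨m, by simp⟩
  rw [AddCircle.coe_add, this, zero_add]

theorem translate_mem_Gam {G : Type*} [Group G] (ρ : G →* Equiv.Perm 𝕊) (m : ℤ) :
    CircleDeg1Lift.translate (Multiplicative.ofAdd (m : ℝ)) ∈ Gam ρ :=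
  ⟨1, fun x => by
    rw [CircleDeg1Lift.translate_apply, coe_int_add]; simp⟩

theorem unit_strictMono (u : CircleDeg1Liftˣ) : StrictMono u := by
  rw [← CircleDeg1Lift.coe_toOrderIso]; exact OrderIso.strictMono _

theorem unit_continuous (u : CircleDeg1Liftˣ) : Continuous u := by
  rw [← CircleDeg1Lift.coe_toOrderIso]; exact OrderIso.continuous _

theorem coe_eq_iff_int (x y : ℝ) : (x : 𝕊) = (y : 𝕊) ↔ ∃ m : ℤ, x = m + y := by
  rw [← sub_eq_zero, ← AddCircle.coe_sub, AddCircle.coe_eq_zero_iff]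
  constructor
  · rintro ⟨n, hn⟩; exact ⟨n, by simp at hn; linarith⟩
  · rintro ⟨n, hn⟩; exact ⟨n, by simp; linarith⟩

theorem rho_continuous {G : Type*} [Group G] (ρ : G →* Equiv.Perm 𝕊)
    (hρ : ∀ g : G, IsC1Diffeo (ρ g)) (g : G) : Continuous (ρ g) := by
  obtain ⟨F, ⟨hc, -, -, hp⟩, -⟩ := hρ g
  have hq : Topology.IsQuotientMap ((↑) : ℝ → 𝕊) := QuotientAddGroup.isOpenQuotientMap_mk.isQuotientMap
  rw [hq.continuous_iff]
  have : (ρ g) ∘ ((↑) : ℝ → 𝕊) = fun x => ((F x : ℝ) : 𝕊) := funext hp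
  rw [this]
  exact (AddCircle.continuous_mk' _).comp hc

/-- an equivariant degree one map yields an invariant measure -/
theorem inv_measure_of_semiconj {G : Type*} [Group G] (ρ : G →* Equiv.Perm 𝕊)
    (hρ : ∀ g : G, IsC1Diffeo (ρ g)) (F : CircleDeg1Lift) (t : CircleDeg1Liftˣ → ℝ)
    (hF : ∀ u ∈ Gam ρ, ∀ x : ℝ, F (u x) = t u + F x) :
    ∃ μ : Measure 𝕊, IsProbabilityMeasure μ ∧ ∀ g : G, Measure.map (ρ g) μ = μ := by
  let S := F.monotone.stieltjesFunction
  have hS : ∀ x, S x = Function.rightLim F x := fun x => F.monotone.stieltjesFunction_eq x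
  have hSu : ∀ u ∈ Gam ρ, ∀ x : ℝ, S (u x) = t u + S x := by
    intro u hu x
    rw [hS, hS]
    have h1 : Tendsto F (𝓝[>] (u x)) (𝓝 (Function.rightLim F (u x))) :=
      F.monotone.tendsto_rightLim _
    have h2 : Tendsto F (𝓝[>] x) (𝓝 (Function.rightLim F x)) :=
      F.monotone.tendsto_rightLim _
    have h3 : Tendsto u (𝓝[>] x) (𝓝[>] (u x)) := by
      refine tendsto_nhdsWithin_iff.2 ⟨(unit_continuous u).continuousAt.mono_left inf_le_left, ?_⟩
      filter_upwards [self_mem_nhdsWithin] with y hy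
      exact unit_strictMono u hy
    have h4 := h1.comp h3
    have h5 : F ∘ u = fun y => t u + F y := funext fun y => hF u hu y
    rw [h5] at h4
    exact tendsto_nhds_unique h4 (h2.const_add _)
  set ν := S.measure with hν
  have hinv : ∀ u ∈ Gam ρ, ν.map u = ν := by
    intro u hu
    refine (Measure.ext_of_Ioc ν (ν.map u) ?_).symm
    intro a b hab
    rw [Measure.map_apply (unit_continuous u).measurable measurableSet_Ioc]
    have hpre : u ⁻¹' Ioc a b = Ioc (u⁻¹ a) (u⁻¹ b) := by
      ext x
      simp only [mem_preimage, mem_Ioc]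
      constructor
      · rintro ⟨h1, h2⟩
        constructor
        · have := unit_strictMono u⁻¹ h1; simpa using this
        · have := (unit_strictMono u⁻¹).monotone h2; simpa using this
      · rintro ⟨h1, h2⟩
        constructor
        · have := unit_strictMono u h1; simpa using this
        · have := (unit_strictMono u).monotone h2; simpa using this
    rw [hpre, hν, StieltjesFunction.measure_Ioc, StieltjesFunction.measure_Ioc,
      hSu _ (inv_mem hu), hSu _ (inv_mem hu)]
    congr 1; ring
  have hone : ∀ m : ℤ, t (CircleDeg1Lift.translate (Multiplicative.ofAdd (m : ℝ))) = m := by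
    intro m
    have := hF _ (translate_mem_Gam ρ m) 0
    rw [CircleDeg1Lift.translate_apply, CircleDeg1Lift.map_int_add] at this
    linarith
  have hS1 : ∀ x : ℝ, S (x + 1) = S x + 1 := by
    intro x
    have := hSu _ (translate_mem_Gam ρ 1) x
    rw [CircleDeg1Lift.translate_apply, hone] at this
    rw [add_comm x 1, add_comm (S x)]
    simpa using this
  have hvadd : VAddInvariantMeasure (AddSubgroup.zmultiples (1:ℝ)) ℝ ν := by
    constructor
    rintro ⟨c, m, hm⟩ s hs
    have h : (ν.map (CircleDeg1Lift.translate (Multiplicative.ofAdd (m : ℝ)))) s = ν s := by rw [hinv _ (translate_mem_Gam ρ m)]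
    rw [Measure.map_apply (unit_continuous _).measurable hs] at h
    convert h using 2
    ext x
    change c + x ∈ s ↔ CircleDeg1Lift.translate (Multiplicative.ofAdd (m : ℝ)) x ∈ s
    have hm' : (m : ℝ) = c := by simpa using hm
    rw [CircleDeg1Lift.translate_apply, hm']
  have hmc : Measurable ((↑) : ℝ → 𝕊) := AddCircle.measurable_mk'
  refine ⟨(ν.restrict (Ioc 0 1)).map (↑), ⟨?_⟩, fun g => ?_⟩
  · rw [Measure.map_apply hmc MeasurableSet.univ, preimage_univ, Measure.restrict_apply_univ, hν,
      StieltjesFunction.measure_Ioc]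
    have := hS1 0
    rw [zero_add] at this
    rw [this]; simp
  · have hgm := (rho_continuous ρ hρ g).measurable
    obtain ⟨F0, hF0, -⟩ := hρ g
    obtain ⟨u, hu, -, hgu⟩ := Gam_exists ρ g F0 hF0
    ext B hB
    rw [Measure.map_apply hgm hB, Measure.map_apply hmc (hgm hB), Measure.map_apply hmc hB,
      Measure.restrict_apply (hmc (hgm hB)), Measure.restrict_apply (hmc hB)]
    have h1 : ((↑) : ℝ → 𝕊) ⁻¹' (ρ g ⁻¹' B) ∩ Ioc 0 1
        = u ⁻¹' ((((↑) : ℝ → 𝕊) ⁻¹' B) ∩ Ioc (u 0) (u 0 + 1)) := by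
      ext x
      simp only [mem_inter_iff, mem_preimage, hgu, mem_Ioc]
      have e1 : u 0 < u x ↔ 0 < x := (unit_strictMono u).lt_iff_lt
      have e2 : u x ≤ u 0 + 1 ↔ x ≤ 1 := by
        rw [← CircleDeg1Lift.map_add_one, zero_add]; exact (unit_strictMono u).le_iff_le
      rw [e1, e2]
    rw [h1, ← Measure.map_apply (unit_continuous u).measurable ((hmc hB).inter measurableSet_Ioc),
      hinv u hu]
    have := (isAddFundamentalDomain_Ioc one_pos (u 0) ν).measure_set_eq
      (isAddFundamentalDomain_Ioc one_pos 0 ν) (hmc hB) (by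
        rintro ⟨c, m, hm⟩
        ext x
        simp only [mem_preimage, AddSubgroup.vadd_def, vadd_eq_add]
        rw [← hm]
        have : ((m • (1:ℝ) + x : ℝ) : 𝕊) = x := by
          simp
        simp only [this])
    rwa [zero_add] at this

/-- if the translation number is a morphism there is an invariant measure -/
theorem inv_measure_of_hom {G : Type*} [Group G] (ρ : G →* Equiv.Perm 𝕊)
    (hρ : ∀ g : G, IsC1Diffeo (ρ g))
    (hF : ∀ u ∈ Gam ρ, ∀ v ∈ Gam ρ, CircleDeg1Lift.translationNumber ((u * v : CircleDeg1Liftˣ) : CircleDeg1Lift) =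
      CircleDeg1Lift.translationNumber u + CircleDeg1Lift.translationNumber v) :
    ∃ μ : Measure 𝕊, IsProbabilityMeasure μ ∧ ∀ g : G, Measure.map (ρ g) μ = μ := by
  let f₁ : Gam ρ →* CircleDeg1Lift := (Units.coeHom _).comp (Gam ρ).subtype
  let φ : Gam ρ →* Multiplicative ℝ :=
    { toFun := fun u => Multiplicative.ofAdd (CircleDeg1Lift.translationNumber (u : CircleDeg1Liftˣ))
      map_one' := by simp
      map_mul' := fun u v => by
        rw [← ofAdd_add, ← hF _ u.2 _ v.2]; rfl }
  let f₂ : Gam ρ →* CircleDeg1Lift := (Units.coeHom _).comp (CircleDeg1Lift.translate.comp φ)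
  obtain ⟨F, h⟩ := CircleDeg1Lift.semiconj_of_group_action_of_forall_translationNumber_eq f₁ f₂
    (fun u => by
      change CircleDeg1Lift.translationNumber (u : CircleDeg1Liftˣ) = CircleDeg1Lift.translationNumber
        (CircleDeg1Lift.translate (Multiplicative.ofAdd (CircleDeg1Lift.translationNumber (u : CircleDeg1Liftˣ))))
      rw [CircleDeg1Lift.translationNumber_translate])
  refine inv_measure_of_semiconj ρ hρ F (fun u => CircleDeg1Lift.translationNumber u) ?_
  intro u hu x
  have := h ⟨u, hu⟩ x
  exact this
end

section
open MeasureTheory Set Filter Topology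
open CircleDeg1Lift (translationNumber translate)

def stepSet (Γ : Subgroup CircleDeg1Liftˣ) (ε x : ℝ) : Set ℝ :=
  {y | x ≤ y ∧ ∃ u ∈ Γ, u y - u x ≤ ε}

theorem stepSet_lt {Γ : Subgroup CircleDeg1Liftˣ} {ε x y : ℝ} (hε : ε < 1)
    (hy : y ∈ stepSet Γ ε x) : y < x + 1 := by
  obtain ⟨-, u, -, hu⟩ := hy
  by_contra! h
  have := (unit_strictMono u).monotone h
  rw [CircleDeg1Lift.map_add_one] at this
  linarith

theorem stepSet_bdd {Γ : Subgroup CircleDeg1Liftˣ} {ε x : ℝ} (hε : ε < 1) :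
    BddAbove (stepSet Γ ε x) := ⟨x + 1, fun _ hy => (stepSet_lt hε hy).le⟩

theorem stepSet_self {Γ : Subgroup CircleDeg1Liftˣ} {ε x : ℝ} (h0 : 0 < ε) :
    x ∈ stepSet Γ ε x := ⟨le_rfl, 1, one_mem _, by simpa using h0.le⟩

theorem stepSet_image {Γ : Subgroup CircleDeg1Liftˣ} {ε x : ℝ} {v : CircleDeg1Liftˣ} (hv : v ∈ Γ) :
    stepSet Γ ε (v x) = v '' stepSet Γ ε x := by
  ext y
  constructor
  · rintro ⟨hy, u, hu, h⟩
    refine ⟨v⁻¹ y, ⟨?_, u * v, mul_mem hu hv, ?_⟩, by simp⟩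
    · have := (unit_strictMono v⁻¹).monotone hy; simpa using this
    · simpa using h
  · rintro ⟨z, ⟨hz, u, hu, h⟩, rfl⟩
    refine ⟨(unit_strictMono v).monotone hz, u * v⁻¹, mul_mem hu (inv_mem hv), ?_⟩
    simpa using h

theorem unit_csSup (v : CircleDeg1Liftˣ) {s : Set ℝ} (hn : s.Nonempty) (hb : BddAbove s) :
    sSup (v '' s) = v (sSup s) := by
  have := (CircleDeg1Lift.toOrderIso v).map_csSup' hn hb
  rw [CircleDeg1Lift.coe_toOrderIso] at this
  exact this.symm

noncomputable def stepMap {G : Type*} [Group G] (ρ : G →* Equiv.Perm 𝕊) (ε : ℝ) (h0 : 0 < ε) (h1 : ε < 1) :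
    CircleDeg1Lift where
  toFun x := sSup (stepSet (Gam ρ) ε x)
  monotone' := by
    intro x x' hx
    refine csSup_le ⟨x, stepSet_self h0⟩ ?_
    rintro y ⟨hy, u, hu, h⟩
    rcases le_total y x' with h' | h'
    · exact h'.trans (le_csSup (stepSet_bdd h1) (stepSet_self h0))
    · refine le_csSup (stepSet_bdd h1) ⟨h', u, hu, ?_⟩
      have := (unit_strictMono u).monotone hx
      linarith
  map_add_one' := by
    intro x
    have h := stepSet_image (ε := ε) (x := x) (translate_mem_Gam ρ 1)
    have h2 := unit_csSup (translate (Multiplicative.ofAdd ((1:ℤ) : ℝ))) ⟨x, stepSet_self (Γ := Gam ρ) h0⟩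
      (stepSet_bdd h1)
    rw [← h, CircleDeg1Lift.translate_apply, CircleDeg1Lift.translate_apply] at h2
    simpa [add_comm] using h2

theorem stepMap_apply {G : Type*} [Group G] (ρ : G →* Equiv.Perm 𝕊) (ε : ℝ) (h0 : 0 < ε) (h1 : ε < 1)
    (x : ℝ) : stepMap ρ ε h0 h1 x = sSup (stepSet (Gam ρ) ε x) := rfl

theorem stepMap_commute {G : Type*} [Group G] (ρ : G →* Equiv.Perm 𝕊) (ε : ℝ) (h0 : 0 < ε) (h1 : ε < 1)
    {v : CircleDeg1Liftˣ} (hv : v ∈ Gam ρ) : Commute (stepMap ρ ε h0 h1) (v : CircleDeg1Lift) := by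
  rw [CircleDeg1Lift.commute_iff_commute]
  intro x
  rw [stepMap_apply, stepMap_apply, stepSet_image hv, unit_csSup v ⟨x, stepSet_self h0⟩ (stepSet_bdd h1)]

theorem le_stepMap {G : Type*} [Group G] (ρ : G →* Equiv.Perm 𝕊) (ε : ℝ) (h0 : 0 < ε) (h1 : ε < 1)
    (x : ℝ) : x + ε ≤ stepMap ρ ε h0 h1 x := by
  rw [stepMap_apply]
  exact le_csSup (stepSet_bdd h1) ⟨by linarith, 1, one_mem _, by simp⟩

theorem le_stepMap_pow {G : Type*} [Group G] (ρ : G →* Equiv.Perm 𝕊) (ε : ℝ) (h0 : 0 < ε) (h1 : ε < 1)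
    (k : ℕ) : k * ε ≤ (stepMap ρ ε h0 h1 ^ k) 0 := by
  induction k with
  | zero => simp
  | succ k ih =>
    rw [pow_succ', CircleDeg1Lift.mul_apply]
    have := le_stepMap ρ ε h0 h1 ((stepMap ρ ε h0 h1 ^ k) 0)
    push_cast; linarith

theorem tn_le_of_commute {f g : CircleDeg1Lift} (h : Commute f g) {x : ℝ} (hx : f x ≤ g x) :
    translationNumber f ≤ translationNumber g := by
  have h1 := f.tendsto_translationNumber x
  have h2 := g.tendsto_translationNumber x
  refine le_of_tendsto_of_tendsto' h1 h2 fun n => ?_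
  have : (f ^ n) x ≤ (g ^ n) x := by
    rw [CircleDeg1Lift.coe_pow, CircleDeg1Lift.coe_pow]
    exact Function.Commute.iterate_le_of_map_le (CircleDeg1Lift.commute_iff_commute.1 h)
      f.monotone g.monotone hx n
  gcongr

theorem approx_step {S u : CircleDeg1Lift} {ε : ℝ} (h0 : 0 < ε) (hS : ∀ k : ℕ, k * ε ≤ (S ^ k) 0)
    (hu : 0 ≤ u 0) : ∃ k : ℕ, (S ^ k) 0 ≤ u 0 ∧ u 0 ≤ (S ^ (k+1)) 0 := by
  have hex : ∃ k : ℕ, u 0 < (S ^ k) 0 := by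
    obtain ⟨k, hk⟩ := exists_nat_gt (u 0 / ε)
    refine ⟨k, lt_of_lt_of_le ?_ (hS k)⟩
    rwa [div_lt_iff₀ h0] at hk
  classical
  have h1 := Nat.find_spec hex
  have hne : Nat.find hex ≠ 0 := by
    intro h
    rw [h] at h1
    simp at h1; linarith
  obtain ⟨k, hk⟩ := Nat.exists_eq_succ_of_ne_zero hne
  refine ⟨k, ?_, ?_⟩
  · have := Nat.find_min hex (m := k) (by omega)
    exact not_lt.1 this
  · rw [hk] at h1; exact h1.le

theorem tn_quasi_pos {S u v : CircleDeg1Lift} {ε : ℝ} (h0 : 0 < ε) (hS : ∀ k : ℕ, k * ε ≤ (S ^ k) 0)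
    (hu : 0 ≤ u 0) (hv : 0 ≤ v 0) (cu : Commute S u) (cv : Commute S v) :
    |translationNumber (u * v) - translationNumber u - translationNumber v| ≤ 2 * translationNumber S := by
  obtain ⟨k, k1, k2⟩ := approx_step h0 hS hu
  obtain ⟨l, l1, l2⟩ := approx_step h0 hS hv
  have key : ∀ {a b : ℕ}, (S ^ a) 0 ≤ u 0 → (S ^ b) 0 ≤ v 0 → (S ^ (a + b)) 0 ≤ (u * v) 0 := by
    intro a b ha hb
    calc (S ^ (a + b)) 0 = (S ^ b) ((S ^ a) 0) := by rw [add_comm, pow_add]; rfl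
      _ ≤ (S ^ b) (u 0) := (S ^ b).monotone ha
      _ = u ((S ^ b) 0) := CircleDeg1Lift.commute_iff_commute.1 (cu.pow_left b) 0
      _ ≤ u (v 0) := u.monotone hb
  have key2 : ∀ {a b : ℕ}, u 0 ≤ (S ^ a) 0 → v 0 ≤ (S ^ b) 0 → (u * v) 0 ≤ (S ^ (a + b)) 0 := by
    intro a b ha hb
    calc u (v 0) ≤ u ((S ^ b) 0) := u.monotone hb
      _ = (S ^ b) (u 0) := (CircleDeg1Lift.commute_iff_commute.1 (cu.pow_left b) 0).symm
      _ ≤ (S ^ b) ((S ^ a) 0) := (S ^ b).monotone ha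
      _ = (S ^ (a + b)) 0 := by rw [add_comm, pow_add]; rfl
  have cuv : Commute S (u * v) := cu.mul_right cv
  have a1 := tn_le_of_commute (cu.pow_left k) k1
  have a2 := tn_le_of_commute (cu.pow_left (k+1)).symm k2
  have b1 := tn_le_of_commute (cv.pow_left l) l1
  have b2 := tn_le_of_commute (cv.pow_left (l+1)).symm l2
  have c1 := tn_le_of_commute (cuv.pow_left (k+l)) (key k1 l1)
  have c2 := tn_le_of_commute (cuv.pow_left (k+1+(l+1))).symm (key2 k2 l2)
  simp only [CircleDeg1Lift.translationNumber_pow] at a1 a2 b1 b2 c1 c2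
  push_cast at *
  rw [abs_le]
  constructor <;> linarith

theorem int_commute (m : ℤ) (u : CircleDeg1Lift) :
    Commute ((translate (Multiplicative.ofAdd (m : ℝ)) : CircleDeg1Liftˣ) : CircleDeg1Lift) u := by
  rw [CircleDeg1Lift.commute_iff_commute]
  intro x
  rw [CircleDeg1Lift.translate_apply, CircleDeg1Lift.translate_apply, CircleDeg1Lift.map_int_add]

theorem tn_quasi {S u v : CircleDeg1Lift} {ε : ℝ} (h0 : 0 < ε) (hS : ∀ k : ℕ, k * ε ≤ (S ^ k) 0)
    (cu : Commute S u) (cv : Commute S v) :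
    |translationNumber (u * v) - translationNumber u - translationNumber v| ≤ 2 * translationNumber S := by
  obtain ⟨m, hm⟩ := exists_int_gt (-(u 0))
  obtain ⟨n, hn⟩ := exists_int_gt (-(v 0))
  set A : CircleDeg1Lift := ((translate (Multiplicative.ofAdd (m : ℝ)) : CircleDeg1Liftˣ) : CircleDeg1Lift) with hA
  set B : CircleDeg1Lift := ((translate (Multiplicative.ofAdd (n : ℝ)) : CircleDeg1Liftˣ) : CircleDeg1Lift) with hB
  have cA : ∀ w, Commute A w := int_commute m
  have cB : ∀ w, Commute B w := int_commute n
  have tA : translationNumber A = m := CircleDeg1Lift.translationNumber_translate _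
  have tB : translationNumber B = n := CircleDeg1Lift.translationNumber_translate _
  have h := tn_quasi_pos (u := A * u) (v := B * v) h0 hS
    (by rw [CircleDeg1Lift.mul_apply, hA, CircleDeg1Lift.translate_apply]; linarith)
    (by rw [CircleDeg1Lift.mul_apply, hB, CircleDeg1Lift.translate_apply]; linarith)
    ((cA S).symm.mul_right cu) ((cB S).symm.mul_right cv)
  have e : A * u * (B * v) = A * (B * (u * v)) := by
    rw [mul_assoc, ← mul_assoc u, ← (cB u).eq, mul_assoc B]
  rw [e, CircleDeg1Lift.translationNumber_mul_of_commute (cA _),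
    CircleDeg1Lift.translationNumber_mul_of_commute (cB _),
    CircleDeg1Lift.translationNumber_mul_of_commute (cA _),
    CircleDeg1Lift.translationNumber_mul_of_commute (cB _), tA, tB] at h
  convert h using 2
  ring

/-- many points contain a proximal pair -/
theorem exists_prox {G : Type*} [Group G] (ρ : G →* Equiv.Perm 𝕊)
    (hρ : ∀ g : G, IsC1Diffeo (ρ g))
    (hno : ¬ ∃ μ : Measure 𝕊, IsProbabilityMeasure μ ∧ ∀ g : G, Measure.map (ρ g) μ = μ) :
    ∃ N : ℕ, ∀ Z : Finset ℝ, (∀ z ∈ Z, z ∈ Ico (0:ℝ) 1) → N < Z.card →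
      ∃ x ∈ Z, ∃ y ∈ Z, x < y ∧ ∀ ε > 0, ∃ u ∈ Gam ρ, u y - u x ≤ ε := by
  have hc : ∃ c > 0, ∀ ε (h0 : 0 < ε) (h1 : ε < 1), c < translationNumber (stepMap ρ ε h0 h1) := by
    by_contra! hcon
    apply hno
    apply inv_measure_of_hom ρ hρ
    intro u hu v hv
    have : ∀ c > 0, |translationNumber ((u * v : CircleDeg1Liftˣ) : CircleDeg1Lift) - translationNumber u - translationNumber v| ≤ 2 * c := by
      intro c hc
      obtain ⟨ε, h0, h1, h⟩ := hcon c hc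
      refine le_trans (tn_quasi h0 (le_stepMap_pow ρ ε h0 h1) (stepMap_commute ρ ε h0 h1 hu)
        (stepMap_commute ρ ε h0 h1 hv)) ?_
      linarith
    have h0 : |translationNumber ((u * v : CircleDeg1Liftˣ) : CircleDeg1Lift) - translationNumber u - translationNumber v| ≤ 0 := by
      refine le_of_forall_pos_le_add fun d hd => ?_
      have := this (d/2) (by positivity)
      linarith
    have := abs_nonpos_iff.1 h0
    linarith
  obtain ⟨c, hc0, hc⟩ := hc
  obtain ⟨N, hN⟩ := exists_nat_gt (1 / c)
  rw [div_lt_iff₀ hc0] at hN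
  refine ⟨N, fun Z hZ hcard => ?_⟩
  have step : ∀ ε, 0 < ε → ε < 1 → ∃ x ∈ Z, ∃ y ∈ Z, x < y ∧ ∃ u ∈ Gam ρ, u y - u x ≤ ε := by
    intro ε h0 h1
    set S := stepMap ρ ε h0 h1
    have hSN : (0:ℝ) + (1:ℕ) < (S ^ N) 0 := by
      apply CircleDeg1Lift.lt_map_of_nat_lt_translationNumber
      rw [CircleDeg1Lift.translationNumber_pow]
      have := hc ε h0 h1
      have hN0 : (0:ℝ) ≤ N := N.cast_nonneg
      push_cast
      nlinarith
    have hex : ∀ z ∈ Z, ∃ k : ℕ, z < (S ^ (k+1)) 0 ∧ (S ^ k) 0 ≤ z ∧ k < N := by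
      intro z hz
      have hzz := hZ z hz
      have hex : ∃ k : ℕ, z < (S ^ k) 0 := ⟨N, by have := hzz.2; push_cast at hSN; linarith⟩
      classical
      have h1 := Nat.find_spec hex
      have hle : Nat.find hex ≤ N := Nat.find_min' hex (by have := hzz.2; push_cast at hSN; linarith)
      have hne : Nat.find hex ≠ 0 := by
        intro h
        rw [h] at h1
        have := hzz.1
        simp at h1; linarith
      obtain ⟨k, hk⟩ := Nat.exists_eq_succ_of_ne_zero hne
      refine ⟨k, by rwa [hk] at h1, ?_, by omega⟩
      exact not_lt.1 (Nat.find_min hex (m := k) (by omega))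
    choose! κ hκ using hex
    obtain ⟨x, hx, y, hy, hne, hxy⟩ := Finset.exists_ne_map_eq_of_card_lt_of_maps_to
      (t := Finset.range N) (by simpa using hcard) (f := κ) (fun z hz => by
        simpa using (hκ z hz).2.2)
    have main : ∀ x ∈ Z, ∀ y ∈ Z, κ x = κ y → x < y → ∃ u ∈ Gam ρ, u y - u x ≤ ε := by
      intro x hx y hy hxy hlt
      have h2 := (hκ y hy).1
      rw [pow_succ', CircleDeg1Lift.mul_apply, stepMap_apply] at h2
      obtain ⟨w, ⟨hw1, u, hu, hw⟩, hyw⟩ := exists_lt_of_lt_csSup ⟨_, stepSet_self h0⟩ h2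
      refine ⟨u, hu, ?_⟩
      have e1 := (unit_strictMono u).monotone hyw.le
      have e2 := (hκ x hx).2.1
      rw [hxy] at e2
      have e3 := (unit_strictMono u).monotone e2
      linarith
    rcases lt_or_gt_of_ne hne with h | h
    · exact ⟨x, hx, y, hy, h, main x hx y hy hxy h⟩
    · exact ⟨y, hy, x, hx, h, main y hy x hx hxy.symm h⟩
  by_contra! hcon
  choose! e he using hcon
  have hZne : (Z ×ˢ Z).Nonempty := by
    have : Z.Nonempty := Finset.card_pos.1 (by omega)
    exact this.product this
  let e' : ℝ × ℝ → ℝ := fun p => if p.1 ∈ Z ∧ p.2 ∈ Z ∧ p.1 < p.2 then e p.1 p.2 else 1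
  obtain ⟨p, hp, hmin⟩ := Finset.exists_min_image (Z ×ˢ Z) e' hZne
  have hpos : 0 < e' p := by
    simp only [e']
    split_ifs with h
    · exact (he _ h.1 _ h.2.1 h.2.2).1
    · exact one_pos
  obtain ⟨x, hx, y, hy, hlt, u, hu, h⟩ := step (min (e' p) (1/2)) (by positivity)
    (lt_of_le_of_lt (min_le_right _ _) (by norm_num))
  have h1 := (he x hx y hy hlt).2 u hu
  have h2 := hmin (x, y) (by simp [hx, hy])
  have h3 : e' (x, y) = e x y := by simp [e', hx, hy, hlt]
  have := min_le_left (e' p) (1/2)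
  linarith
end

section
open MeasureTheory Set Filter Topology

theorem dist_coe_le (a b : ℝ) : dist (a : 𝕊) (b : 𝕊) ≤ |a - b| := by
  rw [dist_eq_norm, ← AddCircle.coe_sub]
  exact QuotientAddGroup.norm_mk_le_norm

def EE {G : Type*} [Group G] (ρ : G →* Equiv.Perm 𝕊) : Set (ℝ → ℝ) :=
  closure ((fun u : CircleDeg1Liftˣ => (u : ℝ → ℝ)) '' (Gam ρ : Set CircleDeg1Liftˣ))

section
variable {G : Type*} [Group G] {ρ : G →* Equiv.Perm 𝕊}

theorem EE_of {u : CircleDeg1Liftˣ} (hu : u ∈ Gam ρ) : (u : ℝ → ℝ) ∈ EE ρ :=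
  subset_closure ⟨u, hu, rfl⟩

theorem EE_mono {f : ℝ → ℝ} (hf : f ∈ EE ρ) : Monotone f := by
  intro x y hxy
  have hcl : IsClosed {f : ℝ → ℝ | f x ≤ f y} := isClosed_le (continuous_apply x) (continuous_apply y)
  refine closure_minimal ?_ hcl hf
  rintro _ ⟨u, hu, rfl⟩
  exact (unit_strictMono u).monotone hxy

theorem EE_add_one {f : ℝ → ℝ} (hf : f ∈ EE ρ) (x : ℝ) : f (x + 1) = f x + 1 := by
  have hcl : IsClosed {f : ℝ → ℝ | f (x + 1) = f x + 1} :=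
    isClosed_eq (continuous_apply _) ((continuous_apply x).add continuous_const)
  refine closure_minimal ?_ hcl hf
  rintro _ ⟨u, hu, rfl⟩
  exact CircleDeg1Lift.map_add_one _ _

theorem EE_comp {f g : ℝ → ℝ} (hf : f ∈ EE ρ) (hg : g ∈ EE ρ) : f ∘ g ∈ EE ρ := by
  have h1 : ∀ u ∈ Gam ρ, (u : ℝ → ℝ) ∘ g ∈ EE ρ := by
    intro u hu
    have hc : Continuous (fun g : ℝ → ℝ => (u : ℝ → ℝ) ∘ g) :=
      continuous_pi fun x => (unit_continuous u).comp (continuous_apply x)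
    refine map_mem_closure hc hg ?_
    rintro _ ⟨v, hv, rfl⟩
    exact ⟨u * v, mul_mem hu hv, by ext x; simp⟩
  have hc : Continuous (fun f : ℝ → ℝ => f ∘ g) := continuous_pi fun x => continuous_apply (g x)
  have : EE ρ = closure (EE ρ) := isClosed_closure.closure_eq.symm
  rw [this]
  refine map_mem_closure (f := fun f : ℝ → ℝ => f ∘ g) hc hf ?_
  rintro _ ⟨v, hv, rfl⟩
  exact h1 v hv

def EElift {f : ℝ → ℝ} (hf : f ∈ EE ρ) : CircleDeg1Lift := ⟨⟨f, EE_mono hf⟩, EE_add_one hf⟩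

theorem EE_int_add {f : ℝ → ℝ} (hf : f ∈ EE ρ) (m : ℤ) (x : ℝ) : f (m + x) = m + f x :=
  (EElift hf).map_int_add m x

theorem EE_shift_mem {f : ℝ → ℝ} (hf : f ∈ EE ρ) (m : ℤ) : (fun x => m + f x) ∈ EE ρ := by
  have := EE_comp (EE_of (translate_mem_Gam ρ m)) hf
  convert this using 1
  ext x
  simp

def KK : Set (ℝ → ℝ) := Set.pi univ fun x => Icc (x - 1) (x + 2)

theorem KK_compact : IsCompact KK := isCompact_univ_pi fun _ => isCompact_Icc

theorem EEK_compact : IsCompact (EE ρ ∩ KK) := KK_compact.inter_left isClosed_closure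

theorem EE_shift {f : ℝ → ℝ} (hf : f ∈ EE ρ) : ∃ m : ℤ, (fun x => m + f x) ∈ EE ρ ∩ KK := by
  refine ⟨-⌊f 0⌋, EE_shift_mem hf _, ?_⟩
  intro x _
  have h1 := EE_mono hf (Int.floor_le x)
  have h2 := EE_mono hf (Int.lt_floor_add_one x).le
  have h3 := EE_int_add hf ⌊x⌋ 0
  have h4 := EE_add_one hf ⌊x⌋
  rw [add_zero] at h3
  have h5 := Int.floor_le (f 0)
  have h6 := Int.lt_floor_add_one (f 0)
  have h7 := Int.floor_le x
  have h8 := Int.lt_floor_add_one x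
  push_cast
  constructor <;> linarith

theorem EE_prox {x y : ℝ} (hxy : x < y) (h : ∀ ε > 0, ∃ u ∈ Gam ρ, u y - u x ≤ ε) :
    ∃ f ∈ EE ρ, f x = f y := by
  let T : ℕ → Set (ℝ → ℝ) := fun n => (EE ρ ∩ KK) ∩ {f | f y - f x ≤ 1 / ((n:ℝ) + 1)}
  have hcl : ∀ n, IsClosed {f : ℝ → ℝ | f y - f x ≤ 1 / ((n:ℝ) + 1)} := fun n =>
    isClosed_le ((continuous_apply y).sub (continuous_apply x)) continuous_const
  have hT : ∀ n, IsCompact (T n) := fun n => EEK_compact.inter_right (hcl n)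
  obtain ⟨f, hf⟩ := IsCompact.nonempty_iInter_of_sequence_nonempty_isCompact_isClosed T
    (by
      rintro n f ⟨hf, hf2⟩
      refine ⟨hf, ?_⟩
      change f y - f x ≤ 1 / ((n:ℝ) + 1)
      have hf3 : f y - f x ≤ 1 / (((n + 1 : ℕ):ℝ) + 1) := hf2
      refine le_trans hf3 ?_
      push_cast
      apply one_div_le_one_div_of_le <;> [positivity; linarith])
    (by
      intro n
      obtain ⟨u, hu, h2⟩ := h (1 / ((n:ℝ) + 1)) (by positivity)
      obtain ⟨m, hm⟩ := EE_shift (EE_of hu)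
      refine ⟨_, hm, ?_⟩
      change (m + u y) - (m + u x) ≤ 1 / ((n:ℝ) + 1)
      linarith)
    (hT 0) (fun n => (hT n).isClosed)
  rw [mem_iInter] at hf
  refine ⟨f, (hf 0).1.1, le_antisymm (EE_mono (hf 0).1.1 hxy.le) ?_⟩
  have h0 : f y - f x ≤ 0 :=
    ge_of_tendsto' tendsto_one_div_add_atTop_nhds_zero_nat fun n => (hf n).2
  linarith

theorem fract_EE {f : ℝ → ℝ} (hf : f ∈ EE ρ) (x : ℝ) : Int.fract (f (Int.fract x)) = Int.fract (f x) := by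
  conv_rhs => rw [← Int.floor_add_fract x, EE_int_add hf]
  simp

theorem EE_finite (hρ : ∀ g : G, IsC1Diffeo (ρ g))
    (hno : ¬ ∃ μ : Measure 𝕊, IsProbabilityMeasure μ ∧ ∀ g : G, Measure.map (ρ g) μ = μ) :
    ∃ f ∈ EE ρ, (range fun x => Int.fract (f x)).Finite := by
  classical
  obtain ⟨N, hN⟩ := exists_prox ρ hρ hno
  have step : ∀ P : Finset ℝ, ∃ f ∈ EE ρ, (P.image fun x => Int.fract (f x)).card ≤ N := by
    intro P
    have hex : ∃ n : ℕ, ∃ f ∈ EE ρ, (P.image fun x => Int.fract (f x)).card = n :=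
      ⟨_, _, EE_of (one_mem _), rfl⟩
    obtain ⟨f, hf, hfn⟩ := Nat.find_spec hex
    refine ⟨f, hf, ?_⟩
    by_contra! hlt
    set Z := P.image fun x => Int.fract (f x) with hZ
    obtain ⟨x, hx, y, hy, hxy, hp⟩ := hN Z (by
      intro z hz
      obtain ⟨p, -, rfl⟩ := Finset.mem_image.1 hz
      exact ⟨Int.fract_nonneg _, Int.fract_lt_one _⟩) hlt
    obtain ⟨h, hh, he⟩ := EE_prox hxy hp
    have him : (P.image fun x => Int.fract ((h ∘ f) x)) = Z.image fun x => Int.fract (h x) := by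
      rw [hZ, Finset.image_image]
      refine Finset.image_congr fun x _ => ?_
      simp [fract_EE hh]
    have hcard : (Z.image fun x => Int.fract (h x)).card < Z.card := by
      refine lt_of_le_of_ne Finset.card_image_le fun heq => ?_
      have := Finset.card_image_iff.1 heq hx hy (by simp [he])
      exact hxy.ne this
    exact Nat.find_min hex (m := (Z.image fun x => Int.fract (h x)).card) (by omega)
      ⟨h ∘ f, EE_comp hh hf, by rw [him]⟩
  let Cl : (Fin (N + 1) → ℝ) → Set (ℝ → ℝ) := fun p =>
    {f | ∃ i j, i ≠ j ∧ ((f (p i) : ℝ) : 𝕊) = ((f (p j) : ℝ) : 𝕊)}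
  have hcl : ∀ p, IsClosed (Cl p) := by
    intro p
    have : Cl p = ⋃ i, ⋃ j, ⋃ (_ : i ≠ j), {f | ((f (p i) : ℝ) : 𝕊) = ((f (p j) : ℝ) : 𝕊)} := by
      ext f; simp [Cl]
    rw [this]
    refine isClosed_iUnion_of_finite fun i => isClosed_iUnion_of_finite fun j =>
      isClosed_iUnion_of_finite fun _ => ?_
    exact isClosed_eq ((AddCircle.continuous_mk' _).comp (continuous_apply _))
      ((AddCircle.continuous_mk' _).comp (continuous_apply _))
  have hcoe : ∀ a b : ℝ, (a : 𝕊) = b ↔ Int.fract a = Int.fract b := by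
    intro a b
    rw [coe_eq_iff_int, Int.fract_eq_fract]
    constructor
    · rintro ⟨m, hm⟩; exact ⟨m, by linarith⟩
    · rintro ⟨m, hm⟩; exact ⟨m, by linarith⟩
  obtain ⟨f, hf, hfC⟩ := EEK_compact (ρ := ρ).inter_iInter_nonempty Cl hcl (by
    intro t
    obtain ⟨f, hf, hcard⟩ := step (t.biUnion fun p => Finset.univ.image p)
    obtain ⟨m, hm⟩ := EE_shift hf
    refine ⟨_, hm, ?_⟩
    rw [mem_iInter₂]
    intro p hp
    obtain ⟨i, -, j, -, hij, he⟩ := Finset.exists_ne_map_eq_of_card_lt_of_maps_to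
      (s := (Finset.univ : Finset (Fin (N+1)))) (t := (t.biUnion fun p => Finset.univ.image p).image fun x => Int.fract (f x))
      (by rw [Finset.card_fin]; omega) (f := fun i => Int.fract (f (p i)))
      (fun i _ => by
        refine Finset.mem_coe.2 (Finset.mem_image.2 ⟨p i, ?_, rfl⟩)
        exact Finset.mem_biUnion.2 ⟨p, hp, Finset.mem_image_of_mem _ (Finset.mem_univ _)⟩)
    refine ⟨i, j, hij, ?_⟩
    rw [coe_int_add, coe_int_add]
    exact (hcoe _ _).2 he)
  refine ⟨f, hf.1, ?_⟩
  by_contra hinf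
  have hinf : (range fun x => Int.fract (f x)).Infinite := hinf
  let e := hinf.natEmbedding
  have hp : ∀ i : Fin (N+1), ∃ x, Int.fract (f x) = e i := fun i => (e i).2
  choose p hp using hp
  rw [mem_iInter] at hfC
  obtain ⟨i, j, hij, h⟩ := hfC p
  rw [hcoe, hp, hp] at h
  have := e.injective (Subtype.ext h)
  exact hij (Fin.ext this)

theorem fin_interval {f : ℝ → ℝ} (hfin : (range fun x => Int.fract (f x)).Finite) (s : Set ℝ) (a b : ℝ)
    (h : ∀ x ∈ s, f x ∈ Icc a b) : (f '' s).Finite := by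
  refine ((Set.finite_Icc ⌊a⌋ ⌊b⌋).image2 (fun (m : ℤ) (t : ℝ) => m + t) hfin).subset ?_
  rintro _ ⟨x, hx, rfl⟩
  exact ⟨⌊f x⌋, ⟨Int.floor_mono (h x hx).1, Int.floor_mono (h x hx).2⟩, _, ⟨x, rfl⟩, Int.floor_add_fract _⟩

theorem loc_const {f : ℝ → ℝ} (hf : Monotone f) (hfin : (range fun x => Int.fract (f x)).Finite) (z : ℝ) :
    ∃ r > 0, (∀ x ∈ Ioc z (z + r), f x = f (z + r)) ∧ ∀ x ∈ Ico (z - r) z, f x = f (z - r) := by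
  have h1 : (f '' Ioc z (z+1)).Finite := fin_interval hfin _ (f z) (f (z+1))
    fun x hx => ⟨hf hx.1.le, hf hx.2⟩
  have h2 : (f '' Ico (z-1) z).Finite := fin_interval hfin _ (f (z-1)) (f z)
    fun x hx => ⟨hf hx.1, hf hx.2.le⟩
  obtain ⟨_, ⟨x0, hx0, rfl⟩, hmin⟩ := Set.exists_min_image _ id h1 ⟨f (z+1), z+1, ⟨by linarith, le_rfl⟩, rfl⟩
  obtain ⟨_, ⟨y0, hy0, rfl⟩, hmax⟩ := Set.exists_max_image _ id h2 ⟨f (z-1), z-1, ⟨le_rfl, by linarith⟩, rfl⟩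
  have e1 : ∀ x ∈ Ioc z x0, f x = f x0 := fun x hx =>
    le_antisymm (hf hx.2) (hmin _ ⟨x, ⟨hx.1, hx.2.trans hx0.2⟩, rfl⟩)
  have e2 : ∀ x ∈ Ico y0 z, f x = f y0 := fun x hx =>
    le_antisymm (hmax _ ⟨x, ⟨hy0.1.trans hx.1, hx.2⟩, rfl⟩) (hf hx.1)
  have hr : 0 < min (x0 - z) (z - y0) := lt_min (by linarith [hx0.1]) (by linarith [hy0.2])
  have l1 := min_le_left (x0 - z) (z - y0)
  have l2 := min_le_right (x0 - z) (z - y0)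
  refine ⟨min (x0 - z) (z - y0), hr, ?_, ?_⟩
  · intro x hx
    rw [e1 x ⟨hx.1, by linarith [hx.2]⟩, e1 (z + _) ⟨by linarith, by linarith⟩]
  · intro x hx
    rw [e2 x ⟨by linarith [hx.1], hx.2⟩, e2 (z - _) ⟨by linarith, by linarith⟩]

theorem exists_contr (hρ : ∀ g : G, IsC1Diffeo (ρ g))
    (hno : ¬ ∃ μ : Measure 𝕊, IsProbabilityMeasure μ ∧ ∀ g : G, Measure.map (ρ g) μ = μ) :
    ∃ A R : Finset 𝕊, ∀ ε > 0, ∃ g : G, ∀ x : 𝕊, (∀ r ∈ R, ε ≤ dist x r) → ∃ a ∈ A, dist (ρ g x) a < ε := by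
  classical
  obtain ⟨f, hf, hfin⟩ := EE_finite hρ hno
  choose r hr hr1 hr2 using loc_const (EE_mono hf) hfin
  obtain ⟨t, -, ht⟩ := (isCompact_Icc (a := (0:ℝ)) (b := 1)).elim_nhds_subcover (fun z => Metric.ball z (r z))
    (fun z _ => Metric.ball_mem_nhds _ (hr z))
  refine ⟨(hfin.image (fun x : ℝ => (x : 𝕊))).toFinset, t.image (fun x : ℝ => (x : 𝕊)), fun ε hε => ?_⟩
  let P : Set ℝ := ⋃ z ∈ t, {z + min ε (r z), z + r z, z - min ε (r z), z - r z}
  have hP : P.Finite := t.finite_toSet.biUnion fun z _ => by simp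
  have hopen : IsOpen (P.pi fun p => Metric.ball (f p) ε) := isOpen_set_pi hP fun _ _ => Metric.isOpen_ball
  obtain ⟨_, hu2, u, ⟨g, hg⟩, rfl⟩ := mem_closure_iff.1 hf _ hopen (fun p _ => Metric.mem_ball_self hε)
  refine ⟨g, fun x hx => ?_⟩
  have key : ∀ p ∈ P, |u p - f p| < ε := fun p hp => by
    have := hu2 p hp
    rwa [Metric.mem_ball, Real.dist_eq] at this
  have hA : ∀ y : ℝ, ((f y : ℝ) : 𝕊) ∈ (hfin.image (fun x : ℝ => (x : 𝕊))).toFinset := by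
    intro y
    rw [Set.Finite.mem_toFinset]
    refine ⟨_, ⟨y, rfl⟩, ?_⟩
    simp only
    rw [coe_eq_iff_int]
    exact ⟨-⌊f y⌋, by rw [Int.fract]; push_cast; ring⟩
  obtain ⟨y, hy, rfl⟩ : ∃ y ∈ Ico (0:ℝ) 1, (y : 𝕊) = x := by
    induction x using QuotientAddGroup.induction_on with
    | H z =>
      refine ⟨Int.fract z, ⟨Int.fract_nonneg _, Int.fract_lt_one _⟩, ?_⟩
      rw [coe_eq_iff_int]
      exact ⟨-⌊z⌋, by rw [Int.fract]; push_cast; ring⟩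
  have := ht ⟨hy.1, hy.2.le⟩
  rw [mem_iUnion₂] at this
  obtain ⟨z, hz, hyz⟩ := this
  rw [Metric.mem_ball, Real.dist_eq] at hyz
  have hd := (hx _ (Finset.mem_image_of_mem _ hz)).trans (dist_coe_le y z)
  have hPz : ∀ p ∈ ({z + min ε (r z), z + r z, z - min ε (r z), z - r z} : Set ℝ), p ∈ P := fun p hp =>
    mem_iUnion₂.2 ⟨z, hz, hp⟩
  have k1 := key _ (hPz (z + min ε (r z)) (by simp))
  have k2 := key _ (hPz (z + r z) (by simp))
  have k3 := key _ (hPz (z - min ε (r z)) (by simp))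
  have k4 := key _ (hPz (z - r z) (by simp))
  have hmin : 0 < min ε (r z) := lt_min hε (hr z)
  have m1 := min_le_left ε (r z)
  have m2 := min_le_right ε (r z)
  rw [hr1 z _ ⟨by linarith, by linarith⟩] at k1
  rw [hr2 z _ ⟨by linarith, by linarith⟩] at k3
  rw [abs_lt] at hyz k1 k2 k3 k4
  rcases le_abs.1 hd with h | h
  · refine ⟨_, hA (z + r z), ?_⟩
    rw [hg]
    refine lt_of_le_of_lt (dist_coe_le _ _) ?_
    have a1 := (unit_strictMono u).monotone (show z + min ε (r z) ≤ y by linarith)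
    have a2 := (unit_strictMono u).monotone (show y ≤ z + r z by linarith)
    rw [abs_lt]; constructor <;> linarith
  · refine ⟨_, hA (z - r z), ?_⟩
    rw [hg]
    refine lt_of_le_of_lt (dist_coe_le _ _) ?_
    have a1 := (unit_strictMono u).monotone (show y ≤ z - min ε (r z) by linarith)
    have a2 := (unit_strictMono u).monotone (show z - r z ≤ y by linarith)
    rw [abs_lt]; constructor <;> linarith
end
end

section
open MeasureTheory Set Filter Topology
open scoped Pointwise

section
variable {G : Type*} [Group G] {ρ : G →* Equiv.Perm 𝕊}

def Contr (ρ : G →* Equiv.Perm 𝕊) (A R : Finset 𝕊) : Prop :=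
  ∀ ε > 0, ∃ g : G, ∀ x : 𝕊, (∀ r ∈ R, ε ≤ dist x r) → ∃ a ∈ A, dist (ρ g x) a < ε

theorem Contr.move [DecidableEq 𝕊] (hρ : ∀ g : G, IsC1Diffeo (ρ g)) {A R : Finset 𝕊} (hc : Contr ρ A R) (h k : G) :
    Contr ρ (A.image (ρ h)) (R.image (ρ k)) := by
  intro ε hε
  obtain ⟨d1, hd1, h1⟩ := Metric.uniformContinuous_iff.1
    (CompactSpace.uniformContinuous_of_continuous (rho_continuous ρ hρ h)) ε hε
  obtain ⟨d2, hd2, h2⟩ := Metric.uniformContinuous_iff.1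
    (CompactSpace.uniformContinuous_of_continuous (rho_continuous ρ hρ k)) ε hε
  obtain ⟨g, hg⟩ := hc (min d1 d2) (lt_min hd1 hd2)
  refine ⟨h * g * k⁻¹, fun x hx => ?_⟩
  obtain ⟨a, ha, hxa⟩ := hg (ρ k⁻¹ x) (fun r hr => by
    by_contra! hlt
    have h3 := h2 (lt_of_lt_of_le hlt (min_le_right _ _))
    have h4 := hx (ρ k r) (Finset.mem_image_of_mem _ hr)
    simp at h3
    linarith)
  refine ⟨ρ h a, Finset.mem_image_of_mem _ ha, ?_⟩
  have := h1 (lt_of_lt_of_le hxa (min_le_left _ _))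
  simpa using this

theorem no_finite_orbit (hρ : ∀ g : G, IsC1Diffeo (ρ g))
    (hno : ¬ ∃ μ : Measure 𝕊, IsProbabilityMeasure μ ∧ ∀ g : G, Measure.map (ρ g) μ = μ) (x : 𝕊) :
    ¬ (range fun g => ρ g x).Finite := by
  intro hfin
  apply hno
  classical
  set O := hfin.toFinset with hO
  have hOmem : ∀ y, y ∈ O ↔ ∃ g, ρ g x = y := by intro y; simp [hO]
  have hne : O.card ≠ 0 := by
    rw [Finset.card_ne_zero]
    exact ⟨x, (hOmem x).2 ⟨1, by simp⟩⟩
  refine ⟨(O.card : ENNReal)⁻¹ • ∑ y ∈ O, Measure.dirac y, ⟨?_⟩, fun g => ?_⟩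
  · simp [Measure.finsetSum_apply]
    exact ENNReal.inv_mul_cancel (by exact_mod_cast hne) (by simp)
  · ext s hs
    have hm : Measurable (ρ g) := (rho_continuous ρ hρ g).measurable
    rw [Measure.map_apply hm hs]
    simp only [Measure.smul_apply, Measure.finsetSum_apply]
    congr 1
    refine Finset.sum_bij (fun y _ => ρ g y) ?_ ?_ ?_ ?_
    · intro y hy
      obtain ⟨h, rfl⟩ := (hOmem y).1 hy
      exact (hOmem _).2 ⟨g * h, by simp⟩
    · intro y _ z _ h; exact (ρ g).injective h
    · intro y hy
      obtain ⟨h, rfl⟩ := (hOmem y).1 hy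
      exact ⟨ρ (g⁻¹ * h) x, (hOmem _).2 ⟨_, rfl⟩, by simp⟩
    · intro y _
      rw [Measure.dirac_apply' _ (hm hs), Measure.dirac_apply' _ hs]
      rfl

def stabS (ρ : G →* Equiv.Perm 𝕊) (p : 𝕊) : Subgroup G where
  carrier := {g | ρ g p = p}
  mul_mem' := by
    intro a b ha hb
    change ρ a p = p at ha
    change ρ b p = p at hb
    change ρ (a * b) p = p
    simp [ha, hb]
  one_mem' := by change ρ 1 p = p; simp
  inv_mem' := by
    intro a ha
    change ρ a p = p at ha
    change ρ a⁻¹ p = p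
    rw [map_inv, Equiv.Perm.inv_eq_iff_eq, ha]

theorem neumann (hρ : ∀ g : G, IsC1Diffeo (ρ g))
    (hno : ¬ ∃ μ : Measure 𝕊, IsProbabilityMeasure μ ∧ ∀ g : G, Measure.map (ρ g) μ = μ) (P Q : Finset 𝕊) :
    ∃ h : G, ∀ p ∈ P, ∀ q ∈ Q, ρ h p ≠ q := by
  classical
  by_contra! hcon
  let s : Finset (𝕊 × 𝕊) := (P ×ˢ Q).filter fun z => ∃ h, ρ h z.1 = z.2
  let c : 𝕊 × 𝕊 → G := fun z => if h : ∃ h, ρ h z.1 = z.2 then h.choose else 1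
  have hc : ∀ z, (∃ h, ρ h z.1 = z.2) → ρ (c z) z.1 = z.2 := by
    intro z hz
    simp only [c, dif_pos hz]
    exact hz.choose_spec
  have hcov : ⋃ i ∈ s, c i • (stabS ρ i.1 : Set G) = Set.univ := by
    rw [eq_univ_iff_forall]
    intro h
    obtain ⟨p, hp, q, hq, hpq⟩ := hcon h
    rw [mem_iUnion₂]
    refine ⟨(p, q), by simp [s, hp, hq]; exact ⟨h, hpq⟩, ?_⟩
    rw [mem_leftCoset_iff]
    change ρ ((c (p,q))⁻¹ * h) p = p
    rw [map_mul, Equiv.Perm.mul_apply, hpq, map_inv, Equiv.Perm.inv_eq_iff_eq]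
    exact (hc (p, q) ⟨h, hpq⟩).symm
  obtain ⟨k, hk, hfi⟩ := Subgroup.exists_finiteIndex_of_leftCoset_cover hcov
  apply no_finite_orbit hρ hno k.1
  have : Finite (G ⧸ stabS ρ k.1) := Subgroup.finite_quotient_of_finiteIndex
  let φ : G ⧸ stabS ρ k.1 → 𝕊 := Quotient.lift (fun g => ρ g k.1) (by
    intro a b hab
    have h2 : a⁻¹ * b ∈ stabS ρ k.1 := QuotientGroup.leftRel_apply.1 hab
    have h2 : ρ (a⁻¹ * b) k.1 = k.1 := h2
    rw [map_mul, Equiv.Perm.mul_apply, map_inv, Equiv.Perm.inv_eq_iff_eq] at h2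
    exact h2.symm)
  refine (Set.finite_range φ).subset ?_
  rintro _ ⟨g, rfl⟩
  exact ⟨QuotientGroup.mk g, rfl⟩

theorem neumann' [DecidableEq 𝕊] (hρ : ∀ g : G, IsC1Diffeo (ρ g))
    (hno : ¬ ∃ μ : Measure 𝕊, IsProbabilityMeasure μ ∧ ∀ g : G, Measure.map (ρ g) μ = μ) (P Q : Finset 𝕊) :
    ∃ h : G, ∀ p ∈ P.image (ρ h), ∀ q ∈ Q, p ≠ q := by
  obtain ⟨h, hh⟩ := neumann hρ hno P Q
  refine ⟨h, fun p hp q hq => ?_⟩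
  obtain ⟨p', hp', rfl⟩ := Finset.mem_image.1 hp
  exact hh p' hp' q hq

theorem schottky (hρ : ∀ g : G, IsC1Diffeo (ρ g))
    (hno : ¬ ∃ μ : Measure 𝕊, IsProbabilityMeasure μ ∧ ∀ g : G, Measure.map (ρ g) μ = μ) :
    ∃ (A R : Bool → Finset 𝕊) (ε : ℝ) (s : Bool → G), 0 < ε ∧ ε < 1 / 16 ∧ (A false).Nonempty ∧
      (∀ i j, ∀ a ∈ A i, ∀ r ∈ R j, 8 * ε ≤ dist a r) ∧
      (∀ a ∈ A false, ∀ b ∈ A true, 8 * ε ≤ dist a b) ∧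
      (∀ a ∈ R false, ∀ b ∈ R true, 8 * ε ≤ dist a b) ∧
      ∀ i x, (∀ r ∈ R i, ε ≤ dist x r) → ∃ a ∈ A i, dist (ρ (s i) x) a < ε := by
  classical
  obtain ⟨A, R, hAR⟩ := exists_contr hρ hno
  obtain ⟨k, hk⟩ := neumann' hρ hno R A
  set R0 := R.image (ρ k) with hR0
  obtain ⟨h, hh⟩ := neumann' hρ hno A (A ∪ R0)
  set A1 := A.image (ρ h) with hA1
  obtain ⟨l, hl⟩ := neumann' hρ hno R (A ∪ R0 ∪ A1)
  set R1 := R.image (ρ l) with hR1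
  have c0 : Contr ρ A R0 := by
    have := Contr.move hρ hAR 1 k
    simpa using this
  have c1 : Contr ρ A1 R1 := Contr.move hρ hAR h l
  set U := A ∪ R0 ∪ A1 ∪ R1 with hU
  have hev : ∀ᶠ ε in 𝓝[>] (0:ℝ), ∀ p ∈ U ×ˢ U, p.1 ≠ p.2 → 8 * ε ≤ dist p.1 p.2 := by
    rw [Filter.eventually_all_finset]
    intro p _
    by_cases hp : p.1 = p.2
    · exact Eventually.of_forall fun _ h => absurd hp h
    · have hd := dist_pos.2 hp
      have : ∀ᶠ ε in 𝓝[>] (0:ℝ), ε < dist p.1 p.2 / 8 :=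
        eventually_nhdsWithin_of_eventually_nhds (eventually_lt_nhds (by positivity))
      filter_upwards [this] with ε h1 _
      linarith
  have hev2 : ∀ᶠ ε in 𝓝[>] (0:ℝ), ε < 1 / 16 :=
    eventually_nhdsWithin_of_eventually_nhds (eventually_lt_nhds (by norm_num))
  obtain ⟨ε, ⟨h1, h2⟩, h3⟩ := ((hev.and hev2).and self_mem_nhdsWithin).exists
  have h3 : 0 < ε := h3
  have sep : ∀ x ∈ U, ∀ y ∈ U, x ≠ y → 8 * ε ≤ dist x y := fun x hx y hy hxy =>
    h1 (x, y) (Finset.mk_mem_product hx hy) hxy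
  obtain ⟨s0, hs0⟩ := c0 ε h3
  obtain ⟨s1, hs1⟩ := c1 ε h3
  have mA : ∀ x ∈ A, x ∈ U := fun x hx => by simp [hU, hx]
  have mR0 : ∀ x ∈ R0, x ∈ U := fun x hx => by simp only [hU, Finset.mem_union, hx]; tauto
  have mA1 : ∀ x ∈ A1, x ∈ U := fun x hx => by simp only [hU, Finset.mem_union, hx]; tauto
  have mR1 : ∀ x ∈ R1, x ∈ U := fun x hx => by simp only [hU, Finset.mem_union, hx]; tauto
  have sR : ∀ a ∈ R0, ∀ b ∈ R1, 8 * ε ≤ dist a b := fun a ha b hb =>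
    sep a (mR0 a ha) b (mR1 b hb) (hl b hb a (by simp only [Finset.mem_union, ha]; tauto)).symm
  refine ⟨fun i => bif i then A1 else A, fun i => bif i then R1 else R0, ε,
    fun i => bif i then s1 else s0, h3, h2, ?_, ?_, ?_, ?_, ?_⟩
  · by_contra hne
    rw [Finset.not_nonempty_iff_eq_empty] at hne
    have hA : A = ∅ := hne
    have key : ∀ x, ∃ r ∈ R0, dist x r < ε := by
      intro x
      by_contra! hx
      obtain ⟨a, ha, -⟩ := hs0 x hx
      simp [hA] at ha
    have key1 : ∀ x, ∃ r ∈ R1, dist x r < ε := by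
      intro x
      by_contra! hx
      obtain ⟨a, ha, -⟩ := hs1 x hx
      simp [hA1, hA] at ha
    obtain ⟨b, hb, -⟩ := key1 0
    obtain ⟨a, ha, hab⟩ := key b
    have := sR a ha b hb
    rw [dist_comm] at this
    linarith
  · rintro (_ | _) (_ | _) a ha r hr
    · exact sep a (mA a ha) r (mR0 r hr) (hk r hr a ha).symm
    · exact sep a (mA a ha) r (mR1 r hr) (hl r hr a (by
        simp only [cond_false] at ha
        simp only [Finset.mem_union, ha]; tauto)).symm
    · exact sep a (mA1 a ha) r (mR0 r hr) (hh a ha r (by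
        simp only [cond_false] at hr
        simp only [Finset.mem_union, hr]; tauto))
    · exact sep a (mA1 a ha) r (mR1 r hr) (hl r hr a (by
        simp only [cond_true] at ha
        simp only [Finset.mem_union, ha]; tauto)).symm
  · intro a ha b hb
    exact sep a (mA a ha) b (mA1 b hb) (hh b hb a (by
        simp only [cond_false] at ha
        simp only [Finset.mem_union, ha]; tauto)).symm
  · exact sR
  · rintro (_ | _) x hx
    · exact hs0 x hx
    · exact hs1 x hx
end
end

section
open MeasureTheory Set Filter Topology

theorem lift_deriv_nonneg {f : Equiv.Perm 𝕊} {F : ℝ → ℝ} (h : IsC1Lift f F) (x : ℝ) : 0 < deriv F x :=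
  lt_of_le_of_ne (h.1.2.1.monotone.deriv_nonneg) (h.2.2 x).symm

theorem lift_deriv_periodic {f : Equiv.Perm 𝕊} {F : ℝ → ℝ} (h : IsC1Lift f F) :
    Function.Periodic (deriv F) 1 := by
  intro x
  have h1 : (fun y => F (y + 1)) = fun y => F y + 1 := funext h.1.2.2.1
  have h2 := congrArg (fun φ => deriv φ x) h1
  simpa [deriv_comp_add_const] using h2

theorem lift_distortion {f : Equiv.Perm 𝕊} {F : ℝ → ℝ} (h : IsC1Lift f F) :
    ∃ M ≥ (1:ℝ), ∃ δ > (0:ℝ), (∀ x y, deriv F x ≤ M * deriv F y) ∧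
      ∀ x y, |x - y| ≤ δ → deriv F x ≤ 5 / 4 * deriv F y := by
  have hcont : Continuous (deriv F) := h.2.1.continuous_deriv le_rfl
  let φ : 𝕊 → ℝ := (lift_deriv_periodic h).lift
  have hφ : ∀ x : ℝ, φ (x : 𝕊) = deriv F x := fun x => (lift_deriv_periodic h).lift_coe x
  have hφc : Continuous φ := by
    have hq : Topology.IsQuotientMap ((↑) : ℝ → 𝕊) := QuotientAddGroup.isOpenQuotientMap_mk.isQuotientMap
    rw [hq.continuous_iff]
    have : φ ∘ ((↑) : ℝ → 𝕊) = deriv F := funext hφ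
    rw [this]; exact hcont
  obtain ⟨a, -, ha⟩ := isCompact_univ.exists_isMinOn (univ_nonempty (α := 𝕊)) hφc.continuousOn
  obtain ⟨b, -, hb⟩ := isCompact_univ.exists_isMaxOn (univ_nonempty (α := 𝕊)) hφc.continuousOn
  have ha' : ∀ x : ℝ, φ a ≤ deriv F x := fun x => by rw [← hφ]; exact ha (mem_univ _)
  have hb' : ∀ x : ℝ, deriv F x ≤ φ b := fun x => by rw [← hφ]; exact hb (mem_univ _)
  have ha0 : 0 < φ a := by
    obtain ⟨t, rfl⟩ := QuotientAddGroup.mk_surjective a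
    change 0 < φ (t : 𝕊)
    rw [hφ]; exact lift_deriv_nonneg h t
  obtain ⟨δ, hδ, hu⟩ := Metric.uniformContinuous_iff.1
    (CompactSpace.uniformContinuous_of_continuous hφc) (φ a / 4) (by positivity)
  have hab : φ a ≤ φ b := (ha' 0).trans (hb' 0)
  refine ⟨φ b / φ a, ?_, δ / 2, by positivity, ?_, ?_⟩
  · rw [ge_iff_le, le_div_iff₀ ha0]; linarith
  · intro x y
    have h1 := ha' y
    calc deriv F x ≤ φ b := hb' x
      _ = φ b / φ a * φ a := by field_simp
      _ ≤ _ := by gcongr; exact div_nonneg (ha0.le.trans hab) ha0.le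
  · intro x y hxy
    have := hu (a := (x : 𝕊)) (b := (y : 𝕊)) (lt_of_le_of_lt (dist_coe_le x y) (by linarith))
    rw [hφ, hφ, Real.dist_eq, abs_lt] at this
    have := ha' y
    linarith

/-- words of length n -/
def LL : ℕ → Finset (List Bool)
  | 0 => {[]}
  | n + 1 => (LL n).image (List.cons true) ∪ (LL n).image (List.cons false)

theorem mem_LL {n : ℕ} {w : List Bool} : w ∈ LL n ↔ w.length = n := by
  induction n generalizing w with
  | zero => simp [LL]
  | succ n ih =>
    cases w with
    | nil => simp [LL]
    | cons i w => cases i <;> simp [LL, ih]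

theorem card_LL (n : ℕ) : (LL n).card = 2 ^ n := by
  induction n with
  | zero => simp [LL]
  | succ n ih =>
    rw [LL, Finset.card_union_of_disjoint, Finset.card_image_of_injective _ List.cons_injective,
      Finset.card_image_of_injective _ List.cons_injective, ih]
    · ring
    · rw [Finset.disjoint_left]
      intro w hw hw2
      simp only [Finset.mem_image] at hw hw2
      obtain ⟨a, -, rfl⟩ := hw
      obtain ⟨b, -, hb⟩ := hw2
      simp at hb

section
variable {G : Type*} [Group G] {ρ : G →* Equiv.Perm 𝕊}

def gw (s : Bool → G) (w : List Bool) : G := (w.map s).prod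

theorem gw_cons (s : Bool → G) (i : Bool) (w : List Bool) : gw s (i :: w) = s i * gw s w := by
  simp [gw]

theorem gw_inv (s : Bool → G) (w : List Bool) : gw (fun i => (s i)⁻¹) w.reverse = (gw s w)⁻¹ := by
  simp [gw, List.prod_inv_reverse, Function.comp_def]

def VV (F : Bool → ℝ → ℝ) : List Bool → ℝ → ℝ
  | [] => id
  | i :: w => F i ∘ VV F w

theorem VV_lift {s : Bool → G} {F : Bool → ℝ → ℝ} (hF : ∀ i, IsC1Lift (ρ (s i)) (F i)) (w : List Bool) :
    StrictMono (VV F w) ∧ (∀ x, VV F w (x + 1) = VV F w x + 1) ∧ Differentiable ℝ (VV F w) ∧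
      ∀ x : ℝ, ρ (gw s w) (x : 𝕊) = (VV F w x : 𝕊) := by
  induction w with
  | nil => exact ⟨strictMono_id, fun _ => rfl, differentiable_id, fun x => by simp [gw, VV]⟩
  | cons i w ih =>
    obtain ⟨h1, h2, h3, h4⟩ := ih
    obtain ⟨⟨a1, a2, a3, a4⟩, a5, a6⟩ := hF i
    refine ⟨a2.comp h1, fun x => ?_, (a5.differentiable (by norm_num)).comp h3, fun x => ?_⟩
    · simp [VV, h2, a3]
    · rw [gw_cons, map_mul, Equiv.Perm.mul_apply, h4, a4]; rfl

theorem VV_deriv {s : Bool → G} {F : Bool → ℝ → ℝ} (hF : ∀ i, IsC1Lift (ρ (s i)) (F i)) (i : Bool)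
    (w : List Bool) (x : ℝ) : deriv (VV F (i :: w)) x = deriv (F i) (VV F w x) * deriv (VV F w) x := by
  have h3 := (VV_lift hF w).2.2.1
  exact deriv_comp x ((hF i).2.1.differentiable (by norm_num) _) (h3 x)

theorem VV_deriv_nonneg {s : Bool → G} {F : Bool → ℝ → ℝ} (hF : ∀ i, IsC1Lift (ρ (s i)) (F i))
    (w : List Bool) (x : ℝ) : 0 ≤ deriv (VV F w) x :=
  (VV_lift hF w).1.monotone.deriv_nonneg

theorem gw_maps {s : Bool → G} {X : Set 𝕊} (hX : ∀ i, ∀ x ∈ X, ρ (s i) x ∈ X) (w : List Bool) :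
    ∀ x ∈ X, ρ (gw s w) x ∈ X := by
  induction w with
  | nil => intro x hx; simpa [gw] using hx
  | cons i w ih =>
    intro x hx
    rw [gw_cons, map_mul, Equiv.Perm.mul_apply]
    exact hX i _ (ih x hx)

theorem gw_disjoint {s : Bool → G} {X : Set 𝕊} (hX : ∀ i, ∀ x ∈ X, ρ (s i) x ∈ X)
    (hd : ∀ x ∈ X, ∀ y ∈ X, ρ (s false) x ≠ ρ (s true) y) (w v : List Bool) (hl : w.length = v.length)
    (hne : w ≠ v) : ∀ x ∈ X, ∀ y ∈ X, ρ (gw s w) x ≠ ρ (gw s v) y := by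
  induction w generalizing v with
  | nil =>
    cases v with
    | nil => exact absurd rfl hne
    | cons j v => simp at hl
  | cons i w ih =>
    cases v with
    | nil => simp at hl
    | cons j v =>
      intro x hx y hy
      rw [gw_cons, gw_cons, map_mul, map_mul, Equiv.Perm.mul_apply, Equiv.Perm.mul_apply]
      have m1 := gw_maps hX w x hx
      have m2 := gw_maps hX v y hy
      by_cases hij : i = j
      · subst hij
        intro he
        refine ih v (by simpa using hl) (fun h => hne (by rw [h])) x hx y hy ((ρ (s i)).injective he)
      · cases i <;> cases j
        · exact absurd rfl hij
        · exact hd _ m1 _ m2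
        · exact (hd _ m2 _ m1).symm
        · exact absurd rfl hij

theorem vol_image (a b : ℝ) (hab : b ≤ a + 1) :
    ENNReal.ofReal (b - a) ≤ volume ((fun x : ℝ => (x : 𝕊)) '' Icc a b) := by
  have hm : MeasurableSet ((fun x : ℝ => (x : 𝕊)) '' Icc a b) :=
    (isCompact_Icc.image (AddCircle.continuous_mk' _)).isClosed.measurableSet
  have := AddCircle.measurePreserving_mk (1:ℝ) a
  rw [← this.measure_preimage hm.nullMeasurableSet, ← Real.volume_Ioc,
    Measure.restrict_apply' measurableSet_Ioc]
  refine measure_mono fun x hx => ⟨⟨x, ⟨hx.1.le, hx.2⟩, rfl⟩, hx.1, hx.2.trans hab⟩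

theorem sum_len {s : Bool → G} {F : Bool → ℝ → ℝ} (hF : ∀ i, IsC1Lift (ρ (s i)) (F i))
    {X : Set 𝕊} (hX : ∀ i, ∀ x ∈ X, ρ (s i) x ∈ X)
    (hd : ∀ x ∈ X, ∀ y ∈ X, ρ (s false) x ≠ ρ (s true) y) {a b : ℝ} (hab : b ≤ a + 1) (hab' : a ≤ b)
    (hC : ∀ x ∈ Icc a b, (x : 𝕊) ∈ X) (n : ℕ) : ∑ w ∈ LL n, (VV F w b - VV F w a) ≤ 1 := by
  have h1 : ∀ w, ENNReal.ofReal (VV F w b - VV F w a) ≤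
      volume ((fun x : ℝ => (x : 𝕊)) '' Icc (VV F w a) (VV F w b)) := by
    intro w
    apply vol_image
    rw [← (VV_lift hF w).2.1]
    exact (VV_lift hF w).1.monotone hab
  have hsub : ∀ w, (fun x : ℝ => (x : 𝕊)) '' Icc (VV F w a) (VV F w b) ⊆ ρ (gw s w) '' X := by
    rintro w _ ⟨y, hy, rfl⟩
    obtain ⟨x, hx, rfl⟩ := intermediate_value_Icc hab' (VV_lift hF w).2.2.1.continuous.continuousOn hy
    exact ⟨x, hC x hx, (VV_lift hF w).2.2.2 x⟩
  have h2 : ∑ w ∈ LL n, volume ((fun x : ℝ => (x : 𝕊)) '' Icc (VV F w a) (VV F w b)) ≤ 1 := by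
    rw [← measure_biUnion_finset]
    · refine (measure_mono (subset_univ _)).trans ?_
      rw [AddCircle.measure_univ]; simp
    · intro w hw v hv hne
      refine Disjoint.mono (hsub w) (hsub v) ?_
      rw [Set.disjoint_left]
      rintro _ ⟨x, hx, rfl⟩ ⟨y, hy, he⟩
      exact gw_disjoint hX hd v w (by rw [mem_LL.1 hw, mem_LL.1 hv]) hne.symm y hy x hx he
    · intro w _
      exact (isCompact_Icc.image (AddCircle.continuous_mk' _)).isClosed.measurableSet
  have h3 : ENNReal.ofReal (∑ w ∈ LL n, (VV F w b - VV F w a)) ≤ ENNReal.ofReal 1 := by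
    rw [ENNReal.ofReal_sum_of_nonneg (fun w _ => sub_nonneg.2 ((VV_lift hF w).1.monotone hab'))]
    simpa using (Finset.sum_le_sum fun w _ => h1 w).trans h2
  exact (ENNReal.ofReal_le_ofReal_iff (by norm_num)).1 h3

/-- good words -/
def GoodW (ℓ : List Bool → ℝ) (K : ℝ) : List Bool → Prop
  | [] => True
  | i :: w => GoodW ℓ K w ∧ ℓ (i :: w) ≤ K * (2/3) ^ (w.length + 1)

open Classical in
theorem bad_count {ℓ : List Bool → ℝ} (h0 : ∀ w, 0 ≤ ℓ w) (h1 : ∀ n, ∑ w ∈ LL n, ℓ w ≤ 1) {K : ℝ} (hK : 0 < K)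
    (n : ℕ) : (((LL n).filter fun w => ¬ GoodW ℓ K w).card : ℝ) ≤ (3 * 2 ^ n - 3 * (3/2) ^ n) / K := by
  induction n with
  | zero => simp [LL, GoodW]
  | succ n ih =>
    set B := (LL n).filter fun w => ¬ GoodW ℓ K w with hB
    set T := (LL (n+1)).filter fun w => K * (2/3) ^ (n+1) < ℓ w with hT
    have hsub : ((LL (n+1)).filter fun w => ¬ GoodW ℓ K w) ⊆
        (B.image (List.cons true) ∪ B.image (List.cons false)) ∪ T := by
      intro w hw
      rw [Finset.mem_filter] at hw
      obtain ⟨hw1, hw2⟩ := hw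
      cases w with
      | nil => simp [GoodW] at hw2
      | cons i w =>
        have hwl : w.length = n := by simpa using mem_LL.1 hw1
        by_cases hg : GoodW ℓ K w
        · refine Finset.mem_union_right _ (Finset.mem_filter.2 ⟨hw1, ?_⟩)
          by_contra! hle
          exact hw2 ⟨hg, by rw [hwl]; exact hle⟩
        · apply Finset.mem_union_left
          have : w ∈ B := Finset.mem_filter.2 ⟨mem_LL.2 hwl, hg⟩
          cases i <;> simp [this]
    have hTc : (T.card : ℝ) * (K * (2/3)^(n+1)) ≤ 1 := by
      calc (T.card : ℝ) * (K * (2/3)^(n+1)) = ∑ w ∈ T, K * (2/3)^(n+1) := by simp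
        _ ≤ ∑ w ∈ T, ℓ w := Finset.sum_le_sum fun w hw => (Finset.mem_filter.1 hw).2.le
        _ ≤ ∑ w ∈ LL (n+1), ℓ w := Finset.sum_le_sum_of_subset_of_nonneg (Finset.filter_subset _ _) fun w _ _ => h0 w
        _ ≤ 1 := h1 _
    have hTc2 : (T.card : ℝ) ≤ (3/2)^(n+1) / K := by
      rw [le_div_iff₀ hK]
      have e : ((2:ℝ)/3)^(n+1) * (3/2)^(n+1) = 1 := by rw [← mul_pow]; norm_num
      have hp : (0:ℝ) < (3/2)^(n+1) := by positivity
      calc (T.card : ℝ) * K = (T.card : ℝ) * (K * (2/3)^(n+1)) * (3/2)^(n+1) := by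
            rw [mul_assoc, mul_assoc K, e, mul_one]
        _ ≤ 1 * (3/2)^(n+1) := by gcongr
        _ = _ := one_mul _
    have hcard : (((LL (n+1)).filter fun w => ¬ GoodW ℓ K w).card : ℝ) ≤ B.card + B.card + T.card := by
      have c1 := Finset.card_le_card hsub
      have c2 := Finset.card_union_le (B.image (List.cons true) ∪ B.image (List.cons false)) T
      have c3 := Finset.card_union_le (B.image (List.cons true)) (B.image (List.cons false))
      have c4 := Finset.card_image_le (s := B) (f := List.cons true)
      have c5 := Finset.card_image_le (s := B) (f := List.cons false)
      exact_mod_cast (by omega)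
    rw [le_div_iff₀ hK] at *
    have hp : (0:ℝ) < (3/2)^n := by positivity
    rw [pow_succ, pow_succ]
    rw [pow_succ] at hTc2
    nlinarith

theorem circle_lift (c : ℝ) {r : ℝ} (p : 𝕊) (hp : p ∈ Metric.closedBall (c : 𝕊) r) :
    ∃ t ∈ Icc (c - r) (c + r), (t : 𝕊) = p := by
  obtain ⟨t, rfl⟩ := QuotientAddGroup.mk_surjective p
  change ((t:ℝ) : 𝕊) ∈ _ at hp
  rw [Metric.mem_closedBall, dist_eq_norm, ← AddCircle.coe_sub, UnitAddCircle.norm_eq, abs_le] at hp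
  refine ⟨((-round (t - c) : ℤ) : ℝ) + t, ?_, coe_int_add _ _⟩
  push_cast
  constructor <;> linarith [hp.1, hp.2]

theorem dist_coe_eq {a b : ℝ} (h : |a - b| ≤ 1 / 2) : dist (a : 𝕊) (b : 𝕊) = |a - b| := by
  rw [dist_eq_norm, ← AddCircle.coe_sub, AddCircle.norm_coe_eq_abs_iff _ one_ne_zero]
  simpa using h

def LipB (f : 𝕊 → 𝕊) (C : Set 𝕊) : Prop := ∀ p ∈ C, ∀ q ∈ C, dist (f p) (f q) ≤ 1 / 2 * dist p q

theorem good_distortion {s : Bool → G} {F : Bool → ℝ → ℝ} (hF : ∀ i, IsC1Lift (ρ (s i)) (F i))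
    {a b M δ K : ℝ} (hM : 1 ≤ M) (hM1 : ∀ i x y, deriv (F i) x ≤ M * deriv (F i) y)
    (hδ : ∀ i x y, |x - y| ≤ δ → deriv (F i) x ≤ 5 / 4 * deriv (F i) y) (N : ℕ) (hN : 1 ≤ N)
    (hNK : ∀ n ≥ N, K * (2/3)^n ≤ δ) (w : List Bool) (hg : GoodW (fun w => VV F w b - VV F w a) K w) :
    ∀ x ∈ Icc a b, ∀ y ∈ Icc a b,
      deriv (VV F w) x ≤ M ^ (min w.length N) * (5/4) ^ w.length * deriv (VV F w) y := by
  induction w with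
  | nil => intro x _ y _; simp [VV]
  | cons i u ih =>
    intro x hx y hy
    have ihu := ih hg.1 x hx y hy
    have p1 := VV_deriv_nonneg hF u x
    have p2 := VV_deriv_nonneg hF u y
    have q1 := lift_deriv_nonneg (hF i) (VV F u x)
    have q2 := lift_deriv_nonneg (hF i) (VV F u y)
    rw [VV_deriv hF, VV_deriv hF]
    have hM0 : 0 < M := by linarith
    by_cases hlt : u.length < N
    · have e : min (i :: u).length N = min u.length N + 1 := by simp; omega
      rw [e, List.length_cons, pow_succ, pow_succ]
      have h1 := hM1 i (VV F u x) (VV F u y)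
      calc _ ≤ (M * deriv (F i) (VV F u y)) *
            (M ^ (min u.length N) * (5/4) ^ u.length * deriv (VV F u) y) := by gcongr
        _ ≤ (M * deriv (F i) (VV F u y)) *
            (M ^ (min u.length N) * (5/4) ^ u.length * deriv (VV F u) y) * (5/4) := by
          apply le_mul_of_one_le_right _ (by norm_num)
          positivity
        _ = _ := by ring
    · have e : min (i :: u).length N = min u.length N := by simp; omega
      have hclose : |VV F u x - VV F u y| ≤ δ := by
        have mono := (VV_lift hF u).1.monotone
        have x1 := mono hx.1
        have x2 := mono hx.2
        have y1 := mono hy.1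
        have y2 := mono hy.2
        have hlen : VV F u b - VV F u a ≤ δ := by
          cases u with
          | nil => simp at hlt; omega
          | cons j v => exact hg.1.2.trans (hNK _ (by simpa using hlt))
        rw [abs_le]; constructor <;> linarith
      rw [e, List.length_cons, pow_succ]
      have h1 := hδ i _ _ hclose
      calc _ ≤ (5/4 * deriv (F i) (VV F u y)) *
            (M ^ (min u.length N) * (5/4) ^ u.length * deriv (VV F u) y) := by gcongr
        _ = _ := by ring

open Classical in
theorem F_count (hρ : ∀ g : G, IsC1Diffeo (ρ g)) (s : Bool → G) {X : Set 𝕊}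
    (hX : ∀ i, ∀ x ∈ X, ρ (s i) x ∈ X)
    (hd : ∀ x ∈ X, ∀ y ∈ X, ρ (s false) x ≠ ρ (s true) y) (c : 𝕊) {ε : ℝ} (hε : 0 < ε) (hε2 : ε < 1 / 16)
    (hC : Metric.closedBall c (2 * ε) ⊆ X) {κ : ℝ} (hκ : 0 < κ) :
    ∃ n0, ∀ n ≥ n0, (((LL n).filter fun w => ¬ LipB (ρ (gw s w)) (Metric.closedBall c (2 * ε))).card : ℝ)
      ≤ κ * 2 ^ n := by
  choose F hF using fun i => hρ (s i)
  obtain ⟨c, rfl⟩ := QuotientAddGroup.mk_surjective c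
  change Metric.closedBall (c : 𝕊) (2 * ε) ⊆ X at hC
  set a := c - 2 * ε with ha
  set b := c + 2 * ε with hb
  have hab : a < b := by linarith
  have hCX : ∀ x ∈ Icc a b, (x : 𝕊) ∈ X := by
    intro x hx
    apply hC
    rw [Metric.mem_closedBall]
    refine (dist_coe_le _ _).trans ?_
    rw [abs_le]; constructor <;> linarith [hx.1, hx.2]
  choose M hM δ hδ hM1 hδ1 using fun i => lift_distortion (hF i)
  set M' := max (M true) (M false)
  set δ' := min (δ true) (δ false)
  have hM' : 1 ≤ M' := le_max_of_le_left (hM true)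
  have hδ' : 0 < δ' := lt_min (hδ true) (hδ false)
  have hM1' : ∀ i x y, deriv (F i) x ≤ M' * deriv (F i) y := by
    intro i x y
    have := lift_deriv_nonneg (hF i) y
    refine (hM1 i x y).trans ?_
    gcongr
    cases i
    · exact le_max_right _ _
    · exact le_max_left _ _
  have hδ1' : ∀ i x y, |x - y| ≤ δ' → deriv (F i) x ≤ 5 / 4 * deriv (F i) y := by
    intro i x y h
    refine hδ1 i x y (h.trans ?_)
    cases i
    · exact min_le_right _ _
    · exact min_le_left _ _
  set K := 3 / κ with hKdef
  have hK : 0 < K := by positivity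
  have t1 : Tendsto (fun n : ℕ => K * (2/3:ℝ)^n) atTop (𝓝 0) := by
    simpa using (tendsto_pow_atTop_nhds_zero_of_lt_one (by norm_num : (0:ℝ) ≤ 2/3) (by norm_num)).const_mul K
  obtain ⟨N0, hN0⟩ := eventually_atTop.1 (t1.eventually_le_const hδ')
  set N := N0 + 1
  have t2 : Tendsto (fun n : ℕ => (M' ^ N * (K / (4 * ε))) * (5/6:ℝ)^n) atTop (𝓝 0) := by
    simpa using (tendsto_pow_atTop_nhds_zero_of_lt_one (by norm_num : (0:ℝ) ≤ 5/6) (by norm_num)).const_mul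
      (M' ^ N * (K / (4 * ε)))
  obtain ⟨n1, hn1⟩ := eventually_atTop.1 (t2.eventually_le_const (by norm_num : (0:ℝ) < 1/2))
  refine ⟨n1 + 1, fun n hn => ?_⟩
  have hbad := bad_count (ℓ := fun w => VV F w b - VV F w a)
    (fun w => sub_nonneg.2 ((VV_lift hF w).1.monotone hab.le))
    (fun n => sum_len hF hX hd (by linarith) hab.le hCX n) hK n
  have hfin : (3 * 2 ^ n - 3 * (3/2:ℝ) ^ n) / K ≤ κ * 2 ^ n := by
    rw [div_le_iff₀ hK, hKdef]
    have : κ * 2 ^ n * (3 / κ) = 3 * 2 ^ n := by field_simp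
    rw [this]
    have : (0:ℝ) < (3/2)^n := by positivity
    linarith
  refine le_trans ?_ (hbad.trans hfin)
  norm_cast
  apply Finset.card_le_card
  intro w hw
  rw [Finset.mem_filter] at hw ⊢
  refine ⟨hw.1, fun hg => hw.2 ?_⟩
  have hwl := mem_LL.1 hw.1
  have hdist := good_distortion hF hM' hM1' hδ1' N (by omega) (fun n hn => hN0 n (by omega)) w hg
  have hlen : VV F w b - VV F w a ≤ K * (2/3)^n := by
    cases w with
    | nil => simp at hwl; omega
    | cons i u => rw [← hwl]; exact hg.2
  have hdiff := (VV_lift hF w).2.2.1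
  have hder : ∀ x ∈ Icc a b, deriv (VV F w) x ≤ 1 / 2 := by
    intro x hx
    obtain ⟨y, hy, hye⟩ := exists_deriv_eq_slope (VV F w) hab hdiff.continuous.continuousOn hdiff.differentiableOn
    have h1 := hdist x hx y (Ioo_subset_Icc_self hy)
    have hba : b - a = 4 * ε := by rw [ha, hb]; ring
    rw [hwl, hye, hba] at h1
    refine h1.trans (le_trans ?_ (hn1 n (by omega)))
    have hpw : M' ^ (min n N) ≤ M' ^ N := pow_le_pow_right₀ hM' (min_le_right _ _)
    have h0 : 0 ≤ VV F w b - VV F w a := sub_nonneg.2 ((VV_lift hF w).1.monotone hab.le)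
    calc M' ^ (min n N) * (5/4)^n * ((VV F w b - VV F w a) / (4 * ε))
        ≤ M' ^ N * (5/4)^n * ((K * (2/3)^n) / (4 * ε)) := by gcongr
      _ = M' ^ N * (K / (4 * ε)) * ((5/4)^n * (2/3)^n) := by ring
      _ = _ := by rw [← mul_pow]; norm_num
  intro p hp q hq
  obtain ⟨t, ht, rfl⟩ := circle_lift c p hp
  obtain ⟨t', ht', rfl⟩ := circle_lift c q hq
  rw [(VV_lift hF w).2.2.2, (VV_lift hF w).2.2.2]
  rw [dist_coe_eq (a := t) (b := t') (by
    rw [abs_le]; constructor <;> linarith [ht.1, ht.2, ht'.1, ht'.2])]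
  refine (dist_coe_le _ _).trans ?_
  have := Convex.norm_image_sub_le_of_norm_deriv_le (f := VV F w) (C := 1/2) (s := Icc a b)
    (fun x _ => hdiff x) (fun x hx => by
      rw [Real.norm_eq_abs, abs_of_nonneg (VV_deriv_nonneg hF w x)]; exact hder x hx)
    (convex_Icc a b) ht' ht
  simpa using this
end
end

section
open MeasureTheory Set Filter Topology

section
variable {G : Type*} [Group G] {ρ : G →* Equiv.Perm 𝕊}

structure Sch (ρ : G →* Equiv.Perm 𝕊) (A R : Bool → Finset 𝕊) (ε : ℝ) (s : Bool → G) : Prop where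
  pos : 0 < ε
  small : ε < 1 / 16
  sepAR : ∀ i j, ∀ a ∈ A i, ∀ r ∈ R j, 8 * ε ≤ dist a r
  sepA : ∀ a ∈ A false, ∀ b ∈ A true, 8 * ε ≤ dist a b
  contr : ∀ i x, (∀ r ∈ R i, ε ≤ dist x r) → ∃ a ∈ A i, dist (ρ (s i) x) a < ε

def XX (R : Bool → Finset 𝕊) (ε : ℝ) : Set 𝕊 := {x | ∀ j, ∀ r ∈ R j, ε ≤ dist x r}

variable {A R : Bool → Finset 𝕊} {ε : ℝ} {s : Bool → G}

theorem Sch.symm (h : Sch ρ A R ε s) (sepR : ∀ a ∈ R false, ∀ b ∈ R true, 8 * ε ≤ dist a b) :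
    Sch ρ R A ε (fun i => (s i)⁻¹) where
  pos := h.pos
  small := h.small
  sepAR := fun i j a ha r hr => by rw [dist_comm]; exact h.sepAR j i r hr a ha
  sepA := sepR
  contr := by
    intro i x hx
    by_contra! hcon
    obtain ⟨a, ha, hlt⟩ := h.contr i (ρ (s i)⁻¹ x) hcon
    have := hx a ha
    simp at hlt
    linarith

theorem Sch.ball (h : Sch ρ A R ε s) {i : Bool} {a : 𝕊} (ha : a ∈ A i) :
    Metric.closedBall a (2 * ε) ⊆ XX R ε := by
  intro x hx j r hr
  rw [Metric.mem_closedBall] at hx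
  have h1 := h.sepAR i j a ha r hr
  have h2 := dist_triangle a x r
  rw [dist_comm a x] at h2
  have := h.pos
  linarith

theorem Sch.near (h : Sch ρ A R ε s) (i : Bool) {x : 𝕊} (hx : x ∈ XX R ε) :
    ∃ a ∈ A i, dist (ρ (s i) x) a < ε := h.contr i x (hx i)

theorem Sch.maps (h : Sch ρ A R ε s) (i : Bool) : ∀ x ∈ XX R ε, ρ (s i) x ∈ XX R ε := by
  intro x hx
  obtain ⟨a, ha, hlt⟩ := h.near i hx
  exact h.ball ha (Metric.mem_closedBall.2 (by have := h.pos; linarith))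

theorem Sch.disj (h : Sch ρ A R ε s) : ∀ x ∈ XX R ε, ∀ y ∈ XX R ε, ρ (s false) x ≠ ρ (s true) y := by
  intro x hx y hy he
  obtain ⟨a, ha, h1⟩ := h.near false hx
  obtain ⟨b, hb, h2⟩ := h.near true hy
  have h3 := h.sepA a ha b hb
  rw [he] at h1
  have h4 := dist_triangle_left a b (ρ (s true) y)
  have := h.pos
  linarith

theorem Sch.near_word (h : Sch ρ A R ε s) {w : List Bool} (hw : w ≠ []) {x : 𝕊} (hx : x ∈ XX R ε) :
    ∃ i, ∃ a ∈ A i, dist (ρ (gw s w) x) a < ε := by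
  cases w with
  | nil => exact absurd rfl hw
  | cons i u =>
    rw [gw_cons, map_mul, Equiv.Perm.mul_apply]
    exact ⟨i, h.near i (gw_maps h.maps u x hx)⟩

open Classical in
theorem Sch.count (h : Sch ρ A R ε s) (hρ : ∀ g : G, IsC1Diffeo (ρ g)) {κ : ℝ} (hκ : 0 < κ) :
    ∀ᶠ n in atTop, (((LL n).filter fun w => ¬ ∀ i, ∀ a ∈ A i,
      LipB (ρ (gw s w)) (Metric.closedBall a (2 * ε))).card : ℝ) ≤ κ * 2 ^ n := by
  set U := A false ∪ A true with hU
  have hκ' : 0 < κ / (U.card + 1) := by positivity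
  have h1 : ∀ᶠ n in atTop, ∀ a ∈ U, (((LL n).filter fun w => ¬ LipB (ρ (gw s w)) (Metric.closedBall a (2 * ε))).card : ℝ)
      ≤ κ / (U.card + 1) * 2 ^ n := by
    rw [Filter.eventually_all_finset]
    intro a ha
    have hsub : Metric.closedBall a (2 * ε) ⊆ XX R ε := by
      rcases Finset.mem_union.1 ha with h' | h'
      · exact h.ball h'
      · exact h.ball h'
    exact eventually_atTop.2 (F_count hρ s h.maps h.disj a h.pos h.small hsub hκ')
  filter_upwards [h1] with n hn
  have hsub : ((LL n).filter fun w => ¬ ∀ i, ∀ a ∈ A i, LipB (ρ (gw s w)) (Metric.closedBall a (2 * ε))) ⊆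
      U.biUnion fun a => (LL n).filter fun w => ¬ LipB (ρ (gw s w)) (Metric.closedBall a (2 * ε)) := by
    intro w hw
    rw [Finset.mem_filter] at hw
    obtain ⟨hw1, hw2⟩ := hw
    push Not at hw2
    obtain ⟨i, a, ha, hl⟩ := hw2
    refine Finset.mem_biUnion.2 ⟨a, ?_, Finset.mem_filter.2 ⟨hw1, hl⟩⟩
    cases i
    · exact Finset.mem_union_left _ ha
    · exact Finset.mem_union_right _ ha
  have h2 : (((LL n).filter fun w => ¬ ∀ i, ∀ a ∈ A i,
      LipB (ρ (gw s w)) (Metric.closedBall a (2 * ε))).card : ℝ) ≤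
      ∑ a ∈ U, (((LL n).filter fun w => ¬ LipB (ρ (gw s w)) (Metric.closedBall a (2 * ε))).card : ℝ) := by
    exact_mod_cast (Finset.card_le_card hsub).trans Finset.card_biUnion_le
  have h3 := Finset.sum_le_sum hn
  rw [Finset.sum_const, nsmul_eq_mul] at h3
  refine (h2.trans h3).trans ?_
  have e : (U.card : ℝ) * (κ / (U.card + 1) * 2 ^ n) = (U.card / (U.card + 1)) * (κ * 2 ^ n) := by ring
  rw [e]
  have : (U.card : ℝ) / (U.card + 1) ≤ 1 := by
    rw [div_le_one (by positivity)]; linarith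
  exact mul_le_of_le_one_left (by positivity) this

theorem Sch.word (h : Sch ρ A R ε s) (sepR : ∀ a ∈ R false, ∀ b ∈ R true, 8 * ε ≤ dist a b)
    (hρ : ∀ g : G, IsC1Diffeo (ρ g)) : ∃ w : List Bool, w ≠ [] ∧
      (∀ i, ∀ a ∈ A i, LipB (ρ (gw s w)) (Metric.closedBall a (2 * ε))) ∧
      ∀ i, ∀ r ∈ R i, LipB (ρ (gw s w)⁻¹) (Metric.closedBall r (2 * ε)) := by
  classical
  have c1 := h.count hρ (κ := 1/3) (by norm_num)
  have c2 := (h.symm sepR).count hρ (κ := 1/3) (by norm_num)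
  obtain ⟨n, ⟨h1, h2⟩, h3⟩ := ((c1.and c2).and (eventually_ge_atTop 1)).exists
  set B1 := (LL n).filter fun w => ¬ ∀ i, ∀ a ∈ A i, LipB (ρ (gw s w)) (Metric.closedBall a (2 * ε)) with hB1
  set B2 := (LL n).filter fun w => ¬ ∀ i, ∀ a ∈ R i, LipB (ρ (gw (fun i => (s i)⁻¹) w)) (Metric.closedBall a (2 * ε)) with hB2
  have hlt : (B1 ∪ B2.image List.reverse).card < (LL n).card := by
    rw [card_LL]
    have k1 := Finset.card_union_le B1 (B2.image List.reverse)
    have k2 := Finset.card_image_le (s := B2) (f := List.reverse)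
    have k3 : ((B1 ∪ B2.image List.reverse).card : ℝ) ≤ B1.card + B2.card := by exact_mod_cast k1.trans (by omega)
    have k4 : (0:ℝ) < 2 ^ n := by positivity
    have k5 : ((B1 ∪ B2.image List.reverse).card : ℝ) < 2 ^ n := by linarith
    exact_mod_cast k5
  obtain ⟨w, hw, hnw⟩ := Finset.exists_mem_notMem_of_card_lt_card hlt
  have hwl := mem_LL.1 hw
  rw [Finset.mem_union, not_or] at hnw
  refine ⟨w, ?_, ?_, ?_⟩
  · rintro rfl; simp at hwl; omega
  · by_contra hcon
    exact hnw.1 (Finset.mem_filter.2 ⟨hw, hcon⟩)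
  · by_contra hcon
    apply hnw.2
    refine Finset.mem_image.2 ⟨w.reverse, Finset.mem_filter.2 ⟨mem_LL.2 (by simpa using hwl), ?_⟩, by simp⟩
    rw [gw_inv]; exact hcon
end

theorem lip_iter {g : 𝕊 → 𝕊} {U : Set 𝕊} {ε : ℝ}
    (hL : ∀ a ∈ U, LipB g (Metric.closedBall a (2 * ε))) {σ : 𝕊 → 𝕊} (hε : 0 < ε)
    (hσ : ∀ a ∈ U, σ a ∈ U ∧ dist (g a) (σ a) < ε) (k : ℕ) :
    ∀ a ∈ U, σ^[k] a ∈ U ∧ MapsTo g^[k] (Metric.closedBall a (2 * ε)) (Metric.closedBall (σ^[k] a) (2 * ε)) ∧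
      ∀ p ∈ Metric.closedBall a (2 * ε), ∀ q ∈ Metric.closedBall a (2 * ε),
        dist (g^[k] p) (g^[k] q) ≤ (1 / 2) ^ k * dist p q := by
  induction k with
  | zero => intro a ha; exact ⟨ha, fun x hx => hx, fun p _ q _ => by simp⟩
  | succ k ih =>
    intro a ha
    obtain ⟨h1, h2, h3⟩ := ih a ha
    simp only [Function.iterate_succ_apply']
    obtain ⟨m1, m2⟩ := hσ _ h1
    have hL1 := hL _ h1
    refine ⟨m1, ?_, ?_⟩
    · intro x hx
      have e := hL1 _ (h2 hx) _ (Metric.mem_closedBall_self (by positivity))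
      have e2 := h2 hx
      rw [Metric.mem_closedBall] at e2 ⊢
      rw [Function.iterate_succ_apply']
      have := dist_triangle (g (g^[k] x)) (g (σ^[k] a)) (σ (σ^[k] a))
      linarith
    · intro p hp q hq
      have e := hL1 _ (h2 hp) _ (h2 hq)
      have e2 := h3 p hp q hq
      rw [pow_succ]
      linarith

theorem lip_iter' {g : 𝕊 → 𝕊} {U : Set 𝕊} {ε : ℝ}
    (hL : ∀ a ∈ U, LipB g (Metric.closedBall a (2 * ε))) {σ : 𝕊 → 𝕊} (hε : 0 < ε)
    (hσ : ∀ a ∈ U, σ a ∈ U ∧ dist (g a) (σ a) < ε) {k : ℕ} (hk : 1 ≤ k) :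
    ∀ a ∈ U, LipB g^[k] (Metric.closedBall a (2 * ε)) := by
  intro a ha p hp q hq
  have h := (lip_iter hL hε hσ k a ha).2.2 p hp q hq
  have : ((1:ℝ)/2)^k ≤ (1/2)^1 := pow_le_pow_of_le_one (by norm_num) (by norm_num) hk
  refine h.trans ?_
  rw [pow_one] at this
  gcongr

theorem lip_periodic {U : Set 𝕊} (hU : U.Finite) (hne : U.Nonempty) {σ : 𝕊 → 𝕊} (hσ : ∀ a ∈ U, σ a ∈ U) :
    ∃ k ≥ 1, ∃ a ∈ U, σ^[k] a = a := by
  obtain ⟨a0, ha0⟩ := hne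
  have hmem : ∀ n, σ^[n] a0 ∈ U := by
    intro n
    induction n with
    | zero => exact ha0
    | succ n ih => rw [Function.iterate_succ_apply']; exact hσ _ ih
  have : Finite U := hU
  obtain ⟨m, n, hmn, he⟩ := Finite.exists_ne_map_eq_of_infinite (fun n : ℕ => (⟨σ^[n] a0, hmem n⟩ : U))
  have he : σ^[m] a0 = σ^[n] a0 := congrArg Subtype.val he
  have main : ∀ m n : ℕ, m < n → σ^[m] a0 = σ^[n] a0 → ∃ k ≥ 1, ∃ a ∈ U, σ^[k] a = a := by
    intro m n hmn he
    refine ⟨n - m, by omega, σ^[m] a0, hmem m, ?_⟩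
    rw [← Function.iterate_add_apply, Nat.sub_add_cancel hmn.le, he]
  rcases lt_or_gt_of_ne hmn with h | h
  · exact main m n h he
  · exact main n m h he.symm

theorem lip_fix {f : 𝕊 → 𝕊} {a : 𝕊} {r : ℝ} (hr : 0 ≤ r) (hL : LipB f (Metric.closedBall a r))
    (hm : MapsTo f (Metric.closedBall a r) (Metric.closedBall a r)) : ∃ x, f x = x := by
  have hc : ContractingWith (1/2) (hm.restrict f _ _) := by
    refine ⟨by rw [← NNReal.coe_lt_coe]; norm_num, LipschitzWith.of_dist_le_mul ?_⟩
    rintro ⟨p, hp⟩ ⟨q, hq⟩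
    have := hL p hp q hq
    simpa [Subtype.dist_eq] using this
  obtain ⟨x, -, hx, -⟩ := ContractingWith.exists_fixedPoint' (Metric.isClosed_closedBall.isComplete) hm hc
    (Metric.mem_closedBall_self hr) (edist_ne_top _ _)
  exact ⟨x, hx⟩

theorem lip_unique {f : 𝕊 → 𝕊} {C : Set 𝕊} (hL : LipB f C) : ({x | f x = x} ∩ C).Subsingleton := by
  rintro p ⟨hp, hpC⟩ q ⟨hq, hqC⟩
  have hp : f p = p := hp
  have hq : f q = q := hq
  have := hL p hpC q hqC
  rw [hp, hq] at this
  have h0 := dist_nonneg (x := p) (y := q)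
  exact dist_le_zero.1 (by linarith)

theorem deriv_ne_one {f : Equiv.Perm 𝕊} {F : ℝ → ℝ} (hF : IsC1Lift f F) {x : ℝ}
    (h : (∀ᶠ y in 𝓝 (x : 𝕊), dist (f y) (f x) ≤ 1 / 2 * dist y (x : 𝕊)) ∨
      (∀ᶠ y in 𝓝 (x : 𝕊), dist y (x : 𝕊) ≤ 1 / 2 * dist (f y) (f x))) : deriv F x ≠ 1 := by
  intro h1
  have hd : HasDerivAt F 1 x := by
    rw [← h1]; exact (hF.2.1.differentiable (by norm_num) x).hasDerivAt
  have hlo := (hasDerivAt_iff_isLittleO.1 hd).def (show (0:ℝ) < 1/4 by norm_num)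
  have hc : Tendsto (fun y : ℝ => (y : 𝕊)) (𝓝 x) (𝓝 (x : 𝕊)) := (AddCircle.continuous_mk' _).continuousAt
  have n1 : ∀ᶠ y in 𝓝 x, |y - x| < 1/2 := by
    have := Metric.ball_mem_nhds x (show (0:ℝ) < 1/2 by norm_num)
    filter_upwards [this] with y hy
    rwa [Metric.mem_ball, Real.dist_eq] at hy
  have n2 : ∀ᶠ y in 𝓝 x, |F y - F x| < 1/2 := by
    have := hF.1.1.continuousAt.eventually (Metric.ball_mem_nhds (F x) (show (0:ℝ) < 1/2 by norm_num))
    filter_upwards [this] with y hy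
    rwa [Real.dist_eq] at hy
  have fin : ∀ᶠ y in 𝓝 x, y = x := by
    rcases h with h | h
    · filter_upwards [hlo, hc.eventually h, n1, n2] with y a b c d
      rw [hF.1.2.2.2, hF.1.2.2.2, dist_coe_eq c.le, dist_coe_eq d.le] at b
      simp only [Real.norm_eq_abs, smul_eq_mul, mul_one] at a
      have e := abs_sub_abs_le_abs_sub (y - x) (F y - F x)
      rw [abs_sub_comm (y - x)] at e
      have := abs_nonneg (y - x)
      have : |y - x| = 0 := by linarith
      linarith [abs_eq_zero.1 this]
    · filter_upwards [hlo, hc.eventually h, n1, n2] with y a b c d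
      rw [hF.1.2.2.2, hF.1.2.2.2, dist_coe_eq c.le, dist_coe_eq d.le] at b
      simp only [Real.norm_eq_abs, smul_eq_mul, mul_one] at a
      have e := abs_sub_abs_le_abs_sub (F y - F x) (y - x)
      have := abs_nonneg (y - x)
      have : |y - x| = 0 := by linarith
      linarith [abs_eq_zero.1 this]
  obtain ⟨y, hy1, hy2⟩ := ((fin.filter_mono nhdsWithin_le_nhds).and
    (self_mem_nhdsWithin : {x}ᶜ ∈ 𝓝[≠] x)).exists
  exact hy2 hy1

theorem dkn_main {G : Type*} [Group G] (ρ : G →* Equiv.Perm 𝕊) (hρ : ∀ g : G, IsC1Diffeo (ρ g))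
    (hno : ¬ ∃ μ : Measure 𝕊, IsProbabilityMeasure μ ∧ ∀ g : G, Measure.map (ρ g) μ = μ) :
    ∃ g : G,
      (∃ F : ℝ → ℝ, IsC1Lift (ρ g) F ∧ ∀ x : ℝ, ρ g (x : 𝕊) = (x : 𝕊) → deriv F x ≠ 1) ∧
      {x : 𝕊 | ρ g x = x}.Nonempty ∧ {x : 𝕊 | ρ g x = x}.Finite := by
  obtain ⟨A, R, ε, s, h1, h2, hne, h3, h4, sepR, h6⟩ := schottky hρ hno
  have h : Sch ρ A R ε s := ⟨h1, h2, h3, h4, h6⟩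
  have h' := h.symm sepR
  obtain ⟨w, hw, hL, hL'⟩ := h.word sepR hρ
  set g := gw s w with hg
  let U : Set 𝕊 := ⋃ i, (A i : Set 𝕊)
  let W : Set 𝕊 := ⋃ i, (R i : Set 𝕊)
  have hUf : U.Finite := Set.finite_iUnion fun i => (A i).finite_toSet
  have hWf : W.Finite := Set.finite_iUnion fun i => (R i).finite_toSet
  have hLU : ∀ a ∈ U, LipB (ρ g) (Metric.closedBall a (2 * ε)) := by
    intro a ha
    obtain ⟨i, hi⟩ := mem_iUnion.1 ha
    exact hL i a hi
  have hLW : ∀ a ∈ W, LipB (ρ g⁻¹) (Metric.closedBall a (2 * ε)) := by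
    intro a ha
    obtain ⟨i, hi⟩ := mem_iUnion.1 ha
    exact hL' i a hi
  have nearX : ∀ x ∈ XX R ε, ∃ a ∈ U, dist (ρ g x) a < ε := by
    intro x hx
    obtain ⟨i, a, ha, hd⟩ := h.near_word hw hx
    exact ⟨a, mem_iUnion.2 ⟨i, ha⟩, hd⟩
  have nearU : ∀ a ∈ U, ∃ b, b ∈ U ∧ dist (ρ g a) b < ε := by
    intro a ha
    obtain ⟨i, hi⟩ := mem_iUnion.1 ha
    obtain ⟨b, hb⟩ := nearX a (h.ball hi (Metric.mem_closedBall_self (by positivity)))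
    exact ⟨b, hb⟩
  have nearW : ∀ a ∈ W, ∃ b, b ∈ W ∧ dist (ρ g⁻¹ a) b < ε := by
    intro a ha
    obtain ⟨i, hi⟩ := mem_iUnion.1 ha
    obtain ⟨j, b, hb, hd⟩ := h'.near_word (w := w.reverse) (by simpa using hw)
      (h'.ball hi (Metric.mem_closedBall_self (by positivity)))
    rw [gw_inv] at hd
    exact ⟨b, mem_iUnion.2 ⟨j, hb⟩, hd⟩
  choose! σ hσ using nearU
  choose! τ hτ using nearW
  obtain ⟨a0, ha0⟩ := hne
  obtain ⟨k, hk, a, haU, hka⟩ := lip_periodic hUf ⟨a0, mem_iUnion.2 ⟨false, ha0⟩⟩ (fun a ha => (hσ a ha).1)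
  have hit : ∀ x, ρ (g ^ k) x = (ρ g)^[k] x := by
    intro x; rw [map_pow, Equiv.Perm.iterate_eq_pow]
  have hit' : ∀ x, ρ (g ^ k)⁻¹ x = (ρ g⁻¹)^[k] x := by
    intro x; rw [← inv_pow, map_pow, Equiv.Perm.iterate_eq_pow]
  have L1 : ∀ a ∈ U, LipB (ρ (g ^ k)) (Metric.closedBall a (2 * ε)) := by
    intro a ha
    have := lip_iter' hLU h1 hσ hk a ha
    rwa [← funext hit] at this
  have L2 : ∀ a ∈ W, LipB (ρ (g ^ k)⁻¹) (Metric.closedBall a (2 * ε)) := by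
    intro a ha
    have := lip_iter' hLW h1 hτ hk a ha
    rwa [← funext hit'] at this
  have loc : ∀ x, ρ (g ^ k) x = x → (∃ a ∈ U, dist x a < ε) ∨ ∃ r ∈ W, dist x r < ε := by
    intro x hx
    by_cases hxX : x ∈ XX R ε
    · left
      obtain ⟨m, rfl⟩ : ∃ m, k = m + 1 := ⟨k - 1, by omega⟩
      have hm : ∀ m, (ρ g)^[m] x ∈ XX R ε := by
        intro m
        induction m with
        | zero => exact hxX
        | succ m ih => rw [Function.iterate_succ_apply']; exact gw_maps h.maps w _ ih
      obtain ⟨a, ha, hd⟩ := nearX _ (hm m)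
      rw [← Function.iterate_succ_apply' (ρ g), ← hit, hx] at hd
      exact ⟨a, ha, hd⟩
    · right
      by_contra! hcon
      exact hxX fun j r hr => hcon r (mem_iUnion.2 ⟨j, hr⟩)
  have inB : ∀ {x a : 𝕊}, dist x a < ε → x ∈ Metric.closedBall a (2 * ε) := by
    intro x a hx
    rw [Metric.mem_closedBall]; linarith
  have inBn : ∀ {x a : 𝕊}, dist x a < ε → Metric.closedBall a (2 * ε) ∈ 𝓝 x := by
    intro x a hx
    exact mem_of_superset (Metric.isOpen_ball.mem_nhds (Metric.mem_ball.2 (hx.trans (by linarith : ε < 2 * ε))))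
      Metric.ball_subset_closedBall
  obtain ⟨F, hF⟩ := hρ (g ^ k)
  refine ⟨g ^ k, ⟨F, hF, ?_⟩, ?_, ?_⟩
  · intro x hx
    apply deriv_ne_one hF
    rcases loc x hx with ⟨a, ha, hd⟩ | ⟨a, ha, hd⟩
    · left
      filter_upwards [inBn hd] with y hy
      exact L1 a ha y hy x (inB hd)
    · right
      have hcont := (rho_continuous ρ hρ (g ^ k)).continuousAt (x := (x : 𝕊))
      have hB : Metric.closedBall a (2 * ε) ∈ 𝓝 (ρ (g ^ k) (x : 𝕊)) := by rw [hx]; exact inBn hd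
      filter_upwards [hcont.eventually hB] with y hy
      have := L2 a ha _ hy _ (mem_of_mem_nhds hB)
      simpa using this
  · have hm := (lip_iter hLU h1 hσ k a haU).2.1
    rw [hka, ← funext hit] at hm
    obtain ⟨x, hx⟩ := lip_fix (by positivity) (L1 a haU) hm
    exact ⟨x, hx⟩
  · have fin1 : (⋃ a ∈ U, ({x | ρ (g ^ k) x = x} ∩ Metric.closedBall a (2 * ε))).Finite :=
      hUf.biUnion fun a ha => (lip_unique (L1 a ha)).finite
    have fin2 : (⋃ a ∈ W, ({x | ρ (g ^ k)⁻¹ x = x} ∩ Metric.closedBall a (2 * ε))).Finite :=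
      hWf.biUnion fun a ha => (lip_unique (L2 a ha)).finite
    refine (fin1.union fin2).subset ?_
    intro x hx
    have hx' : ρ (g ^ k) x = x := hx
    rcases loc x hx' with ⟨a, ha, hd⟩ | ⟨a, ha, hd⟩
    · left
      exact mem_iUnion₂.2 ⟨a, ha, hx, inB hd⟩
    · right
      refine mem_iUnion₂.2 ⟨a, ha, ?_, inB hd⟩
      change ρ (g ^ k)⁻¹ x = x
      rw [map_inv, Equiv.Perm.inv_eq_iff_eq, hx']
end

end DKNhelpers

/-- Deroin–Kleptsyn–Navas.  Let `G` be a countable group with an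
orientation preserving `C¹` action on the circle.  If there is no `G`-invariant Borel
probability measure, then some `g ∈ G` has only hyperbolic fixed points (the derivative
of `g` at each fixed point is `≠ 1`); in particular `g` has a nonempty finite set of
fixed points. -/
theorem deroin_kleptsyn_navas
    (G : Type*) [Group G] [Countable G]
    (ρ : G →* Equiv.Perm 𝕊) (hρ : ∀ g : G, IsC1Diffeo (ρ g))
    (hno : ¬ ∃ μ : Measure 𝕊, IsProbabilityMeasure μ ∧ ∀ g : G, Measure.map (ρ g) μ = μ) :
    ∃ g : G,
      (∃ F : ℝ → ℝ, IsC1Lift (ρ g) F ∧ ∀ x : ℝ, ρ g (x : 𝕊) = (x : 𝕊) → deriv F x ≠ 1) ∧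
      {x : 𝕊 | ρ g x = x}.Nonempty ∧ {x : 𝕊 | ρ g x = x}.Finite :=
  dkn_main ρ hρ hno
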